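/- Let k ≥ 3 be an integer with k ∉ {4,5}. For all sufficiently large n, if G is an n-vertex W_{2k+1}-free simple graph attaining the maximum spectral radius among all n-vertex W_{2k+1}-free graphs and V(G) = L ⊔ R is a maximum cut of G, then n/2 − 1 ≤ |L| ≤ n/2 + 1 and n/2 − 1 ≤ |R| ≤ n/2 + 1. -/

import Mathlib

/-- The wheel graph on `t` vertices: vertex `0` joined to every vertex of the
cycle `1, 2, …, t-1` (with `t-1` adjacent to `1`). -/
def wheelGraph (t : ℕ) : SimpleGraph (Fin t) where
  Adj a b := a ≠ b ∧ (a.val = 0 ∨ b.val = 0 ∨ a.val + 1 = b.val ∨ b.val + 1 = a.val ∨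
      (a.val = 1 ∧ b.val = t - 1) ∨ (b.val = 1 ∧ a.val = t - 1))
  symm := by
    constructor
    intro a b h
    exact ⟨h.1.symm, by tauto⟩
  loopless := by
    constructor
    intro a h
    exact h.1 rfl

/-- `G` contains a copy of `F`, i.e. a subgraph isomorphic to `F`. -/
def ContainsCopy {α β : Type*} (F : SimpleGraph α) (G : SimpleGraph β) : Prop :=
  ∃ f : α ↪ β, ∀ a b, F.Adj a b → G.Adj (f a) (f b)

/-- `G` is `W_t`-free: it contains no subgraph isomorphic to the wheel on `t` vertices. -/
def WheelFree (t : ℕ) {n : ℕ} (G : SimpleGraph (Fin n)) : Prop :=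
  ¬ ContainsCopy (wheelGraph t) G

/-- The spectral radius of `G`: the largest eigenvalue of its adjacency matrix. -/
noncomputable def lam1 {n : ℕ} (G : SimpleGraph (Fin n)) : ℝ := by
  classical
  exact sSup {μ : ℝ | Module.End.HasEigenvalue (Matrix.toLin' (G.adjMatrix ℝ)) μ}

/-- The number of edges of a graph on a finite vertex type. -/
noncomputable def edgeCount {V : Type*} [Fintype V] (G : SimpleGraph V) : ℕ := by
  classical
  exact G.edgeFinset.card

/-- The degree of a vertex. -/
noncomputable def deg {n : ℕ} (G : SimpleGraph (Fin n)) (v : Fin n) : ℕ := by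
  classical
  exact G.degree v

/-- The number of neighbours of `v` inside the set `A`. -/
noncomputable def degIn {n : ℕ} (G : SimpleGraph (Fin n)) (A : Finset (Fin n)) (v : Fin n) : ℕ := by
  classical
  exact (A.filter fun u => G.Adj v u).card

/-- The number of edges of `G` with one endpoint in `S` and the other outside `S`. -/
noncomputable def cutCount {n : ℕ} (G : SimpleGraph (Fin n)) (S : Finset (Fin n)) : ℕ := by
  classical
  exact ((Finset.univ : Finset (Fin n × Fin n)).filter
    fun p => G.Adj p.1 p.2 ∧ p.1 ∈ S ∧ p.2 ∉ S).card

/-- `(S, T)` is a maximum cut of `G`. -/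
def IsMaxCut {n : ℕ} (G : SimpleGraph (Fin n)) (S T : Finset (Fin n)) : Prop :=
  T = Sᶜ ∧ ∀ S' : Finset (Fin n), cutCount G S' ≤ cutCount G S

/-- `G` attains the maximum spectral radius among all `n`-vertex `W_t`-free graphs. -/
def IsSpexWheel (t : ℕ) {n : ℕ} (G : SimpleGraph (Fin n)) : Prop :=
  WheelFree t G ∧ ∀ H : SimpleGraph (Fin n), WheelFree t H → lam1 H ≤ lam1 G

/-- `G` attains the maximum number of edges among all `n`-vertex `W_t`-free graphs. -/
def IsExWheel (t : ℕ) {n : ℕ} (G : SimpleGraph (Fin n)) : Prop :=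
  WheelFree t G ∧ ∀ H : SimpleGraph (Fin n), WheelFree t H → edgeCount H ≤ edgeCount G


section ABSpectral
open scoped Classical
open Finset

/-- neighbours of `v` inside `S` -/
noncomputable def nb {V : Type*} (G : SimpleGraph V) (S : Finset V) (v : V) : Finset V :=
  S.filter (fun u => G.Adj v u)

lemma mem_nb {V : Type*} {G : SimpleGraph V} {S : Finset V} {v u : V} :
    u ∈ nb G S v ↔ u ∈ S ∧ G.Adj v u := by
  simp [nb]

/-- quadratic form of the adjacency matrix -/
noncomputable def QF {V : Type*} [Fintype V] (G : SimpleGraph V) (y : V → ℝ) : ℝ :=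
  ∑ v, y v * ∑ u ∈ nb G univ v, y u

lemma adj_mulVec {n : ℕ} (G : SimpleGraph (Fin n)) (y : Fin n → ℝ) (v : Fin n) :
    ((G.adjMatrix ℝ).mulVec y) v = ∑ u ∈ nb G univ v, y u := by
  rw [SimpleGraph.adjMatrix_mulVec_apply]
  apply Finset.sum_congr _ (fun _ _ => rfl)
  ext u; simp [nb]

lemma QF_eq {n : ℕ} (G : SimpleGraph (Fin n)) (y : Fin n → ℝ) :
    QF G y = dotProduct y ((G.adjMatrix ℝ).mulVec y) := by
  simp only [QF, dotProduct, adj_mulVec]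

lemma spec_max {n : ℕ} (hn : 0 < n) (G : SimpleGraph (Fin n)) :
    ∃ (μ : ℝ) (x : Fin n → ℝ), (∀ v, 0 ≤ x v) ∧ (∃ v, x v ≠ 0) ∧ QF G x = μ * ∑ v, x v ^ 2 ∧
      ∀ y, QF G y ≤ μ * ∑ v, y v ^ 2 := by
  haveI : Nonempty (Fin n) := ⟨⟨0, hn⟩⟩
  let K : Set (Fin n → ℝ) := {y | ∑ v, y v ^ 2 = 1}
  have hK : IsCompact K := by
    apply Metric.isCompact_of_isClosed_isBounded
    · exact isClosed_eq (by fun_prop) (by fun_prop)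
    · rw [isBounded_iff_forall_norm_le]
      refine ⟨1, fun y hy => ?_⟩
      rw [pi_norm_le_iff_of_nonneg (by norm_num)]
      intro i
      have h1 : y i ^ 2 ≤ ∑ v, y v ^ 2 :=
        Finset.single_le_sum (f := fun v => y v ^ 2) (fun v _ => sq_nonneg _) (mem_univ i)
      have hy' : ∑ v, y v ^ 2 = 1 := hy
      rw [Real.norm_eq_abs, abs_le_one_iff_mul_self_le_one]
      nlinarith
  have hne : K.Nonempty := by
    refine ⟨Pi.single ⟨0, hn⟩ 1, ?_⟩
    show ∑ v, (Pi.single (⟨0, hn⟩ : Fin n) (1 : ℝ) : Fin n → ℝ) v ^ 2 = 1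
    rw [Finset.sum_eq_single ⟨0, hn⟩]
    · simp
    · intro b _ hb; simp [Pi.single_apply, hb]
    · simp
  have hcont : Continuous (QF G) := by
    unfold QF; fun_prop
  obtain ⟨y0, hy0, hmax⟩ := hK.exists_isMaxOn hne hcont.continuousOn
  have hy0' : ∑ v, y0 v ^ 2 = 1 := hy0
  have hall : ∀ y, QF G y ≤ QF G y0 * ∑ v, y v ^ 2 := by
    intro y
    have hs0 : 0 ≤ ∑ v, y v ^ 2 := Finset.sum_nonneg (fun v _ => sq_nonneg _)
    rcases hs0.eq_or_lt with h0 | hpos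
    · have hz : ∀ v, y v = 0 := by
        intro v
        have := (Finset.sum_eq_zero_iff_of_nonneg (fun v _ => sq_nonneg (y v))).1 h0.symm v (mem_univ v)
        exact pow_eq_zero_iff (two_ne_zero) |>.1 this
      have : QF G y = 0 := by simp [QF, hz]
      rw [this, ← h0]; simp
    · set s := ∑ v, y v ^ 2 with hs
      set c := (Real.sqrt s)⁻¹ with hc
      have hc2 : c ^ 2 = s⁻¹ := by rw [hc, inv_pow, Real.sq_sqrt hs0]
      have hmem : (fun v => c * y v) ∈ K := by
        show ∑ v, (c * y v) ^ 2 = 1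
        simp only [mul_pow, ← Finset.mul_sum, ← hs, hc2]
        exact inv_mul_cancel₀ hpos.ne'
      have h1 : QF G (fun v => c * y v) ≤ QF G y0 := hmax hmem
      have h2 : QF G (fun v => c * y v) = c ^ 2 * QF G y := by
        simp only [QF, ← Finset.mul_sum]
        rw [Finset.mul_sum]
        apply Finset.sum_congr rfl; intros; ring
      rw [h2, hc2, inv_mul_le_iff₀ hpos] at h1
      linarith
  refine ⟨QF G y0, fun v => |y0 v|, fun v => abs_nonneg _, ?_, ?_, hall⟩
  · by_contra hcon
    push Not at hcon
    have : ∀ v, y0 v = 0 := fun v => abs_eq_zero.1 (hcon v)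
    simp [this] at hy0'
  · apply le_antisymm
    · exact hall _
    · simp only [sq_abs, hy0', mul_one]
      unfold QF
      apply Finset.sum_le_sum
      intro v _
      rw [Finset.mul_sum, Finset.mul_sum]
      apply Finset.sum_le_sum
      intro u _
      rw [← abs_mul]; exact le_abs_self _

lemma spec_exists {n : ℕ} (hn : 0 < n) (G : SimpleGraph (Fin n)) :
    (∃ x : Fin n → ℝ, (∀ v, 0 ≤ x v) ∧ (∃ z, x z = 1) ∧ (∀ v, x v ≤ 1) ∧
      (∀ v, lam1 G * x v = ∑ u ∈ nb G univ v, x u)) ∧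
      ∀ y, QF G y ≤ lam1 G * ∑ v, y v ^ 2 := by
  obtain ⟨μ, x, hx0, ⟨w, hw⟩, hQ, hall⟩ := spec_max hn G
  have hpsd : (μ • (1 : Matrix (Fin n) (Fin n) ℝ) - G.adjMatrix ℝ).PosSemidef := by
    apply Matrix.PosSemidef.of_dotProduct_mulVec_nonneg
    · apply Matrix.IsHermitian.sub
      · ext i j; simp [Matrix.one_apply, eq_comm]
      · ext i j; simp [SimpleGraph.adj_comm]
    · intro y
      have := hall y
      rw [QF_eq] at this
      simp only [star_trivial, Matrix.sub_mulVec, dotProduct_sub, Matrix.smul_mulVec,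
        Matrix.one_mulVec, dotProduct_smul, smul_eq_mul]
      have h2 : dotProduct y y = ∑ v, y v ^ 2 := by simp [dotProduct, sq]
      rw [h2]; linarith
  have heig : ∀ v, μ * x v = ∑ u ∈ nb G univ v, x u := by
    have h := (hpsd.dotProduct_mulVec_zero_iff x).1 (by
      rw [QF_eq] at hQ
      simp only [star_trivial, Matrix.sub_mulVec, dotProduct_sub, Matrix.smul_mulVec,
        Matrix.one_mulVec, dotProduct_smul, smul_eq_mul]
      have h2 : dotProduct x x = ∑ v, x v ^ 2 := by simp [dotProduct, sq]
      rw [h2]; linarith)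
    intro v
    have := congrFun h v
    simp only [Matrix.sub_mulVec, Matrix.smul_mulVec, Matrix.one_mulVec, Pi.sub_apply,
      Pi.smul_apply, smul_eq_mul, adj_mulVec, Pi.zero_apply] at this
    linarith
  have hlam : lam1 G = μ := by
    unfold lam1
    apply IsGreatest.csSup_eq
    constructor
    · apply Module.End.hasEigenvalue_of_hasEigenvector (x := x)
      refine ⟨?_, ?_⟩
      · rw [Module.End.mem_eigenspace_iff]
        ext v
        rw [Matrix.toLin'_apply, adj_mulVec, ← heig]; simp
      · intro h; exact hw (congrFun h w)
    · intro ν hν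
      obtain ⟨y, hy⟩ := hν.exists_hasEigenvector
      have h1 := hy.apply_eq_smul
      rw [Matrix.toLin'_apply] at h1
      have h2 := hall y
      have h3 : dotProduct y y = ∑ v, y v ^ 2 := by simp [dotProduct, sq]
      rw [QF_eq, h1, dotProduct_smul, smul_eq_mul, h3] at h2
      have hpos : 0 < ∑ v, y v ^ 2 := by
        rw [← h3]
        have := hy.2
        rcases (Finset.sum_nonneg (fun v (_ : v ∈ (univ : Finset (Fin n))) => sq_nonneg (y v))).eq_or_lt with h | h
        · exfalso; apply this
          rw [← h3] at h
          exact dotProduct_self_eq_zero.1 h.symm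
        · rw [h3]; exact h
      exact le_of_mul_le_mul_right h2 hpos
  refine ⟨?_, by rw [hlam]; exact hall⟩
  haveI : Nonempty (Fin n) := ⟨⟨0, hn⟩⟩
  obtain ⟨z, -, hz⟩ := Finset.exists_max_image univ x univ_nonempty
  have hzpos : 0 < x z := lt_of_lt_of_le (lt_of_le_of_ne (hx0 w) (Ne.symm hw)) (hz w (mem_univ w))
  refine ⟨fun v => x v / x z, fun v => div_nonneg (hx0 v) hzpos.le, ⟨z, div_self hzpos.ne'⟩, ?_, ?_⟩
  · intro v; rw [div_le_one hzpos]; exact hz v (mem_univ v)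
  · intro v
    rw [hlam, ← Finset.sum_div, ← heig, mul_div_assoc]

end ABSpectral


section ABWheel
open scoped Classical
open Finset

lemma wheel_of_list {V : Type*} (G : SimpleGraph V) (k : ℕ) (hk : 2 ≤ k) (c : V) (l : List V)
    (hlen : l.length = 2 * k) (hnd : l.Nodup) (hch : l.IsChain G.Adj)
    (hclose : ∀ a ∈ l.getLast?, ∀ b ∈ l.head?, G.Adj a b) (hc : ∀ a ∈ l, G.Adj c a) :
    ContainsCopy (wheelGraph (2 * k + 1)) G := by
  have hget : ∀ i (hi : i + 1 < l.length), G.Adj l[i] l[i+1] :=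
    fun i hi => List.isChain_iff_getElem.1 hch i hi
  have hlast : G.Adj (l[2 * k - 1]'(by omega)) (l[0]'(by omega)) := by
    apply hclose
    · rw [List.getLast?_eq_getElem?, List.getElem?_eq_getElem (by omega)]; simp [hlen]
    · rw [List.head?_eq_getElem?, List.getElem?_eq_getElem (by omega)]; simp
  let f : Fin (2 * k + 1) → V := fun i => if h : i.val = 0 then c else l[i.val - 1]'(by have := i.2; omega)
  have hf0 : ∀ i : Fin (2 * k + 1), i.val = 0 → f i = c := fun i h => dif_pos h
  have hf1 : ∀ (i : Fin (2 * k + 1)) (h : i.val ≠ 0), f i = l[i.val - 1]'(by have := i.2; omega) :=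
    fun i h => dif_neg h
  have hfc : ∀ i : Fin (2 * k + 1), i.val ≠ 0 → G.Adj c (f i) := by
    intro i h; rw [hf1 i h]; exact hc _ (List.getElem_mem _)
  have hinj : Function.Injective f := by
    intro i j hij
    by_cases hi : i.val = 0 <;> by_cases hj : j.val = 0
    · exact Fin.ext (by omega)
    · have := hfc j hj; rw [← hij, hf0 i hi] at this; exact absurd this (G.loopless.irrefl _)
    · have := hfc i hi; rw [hij, hf0 j hj] at this; exact absurd this (G.loopless.irrefl _)
    · rw [hf1 i hi, hf1 j hj] at hij
      have := (List.Nodup.getElem_inj_iff hnd).1 hij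
      exact Fin.ext (by omega)
  have hsucc : ∀ i j : Fin (2 * k + 1), i.val ≠ 0 → j.val = i.val + 1 → G.Adj (f i) (f j) := by
    intro i j hi hj
    rw [hf1 i hi, hf1 j (by omega)]
    have h := hget (i.val - 1) (by have := j.2; omega)
    have e : j.val - 1 = i.val - 1 + 1 := by omega
    simp only [e]; exact h
  have hwrap : ∀ i j : Fin (2 * k + 1), i.val = 1 → j.val = 2 * k → G.Adj (f j) (f i) := by
    intro i j hi hj
    rw [hf1 i (by omega), hf1 j (by omega)]
    simp only [hi, hj]; exact hlast
  refine ⟨⟨f, hinj⟩, ?_⟩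
  intro a b ⟨hab, h⟩
  show G.Adj (f a) (f b)
  have hne : a.val ≠ b.val := fun h => hab (Fin.ext h)
  by_cases ha : a.val = 0
  · rw [hf0 a ha]; exact hfc b (by omega)
  by_cases hb : b.val = 0
  · rw [hf0 b hb]; exact (hfc a ha).symm
  rcases h with h | h | h | h | ⟨h1, h2⟩ | ⟨h1, h2⟩
  · exact absurd h ha
  · exact absurd h hb
  · exact hsucc a b ha h.symm
  · exact (hsucc b a hb h.symm).symm
  · exact (hwrap a b h1 (by omega)).symm
  · exact hwrap b a h1 (by omega)

lemma rim_of_wheel {V : Type*} (G : SimpleGraph V) (k : ℕ) (hk : 2 ≤ k)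
    (h : ContainsCopy (wheelGraph (2 * k + 1)) G) :
    ∃ (c : V) (g : ℕ → V), (∀ i, G.Adj c (g i)) ∧ (∀ i, G.Adj (g i) (g (i + 1))) ∧
      (∀ i j, g i = g j → i % (2 * k) = j % (2 * k)) ∧ g (2 * k) = g 0 := by
  obtain ⟨f, hf⟩ := h
  have hpos : 0 < 2 * k := by omega
  refine ⟨f ⟨0, by omega⟩, fun i => f ⟨1 + i % (2 * k), by have := Nat.mod_lt i hpos; omega⟩, ?_, ?_, ?_, ?_⟩
  · intro i
    apply hf
    refine ⟨?_, Or.inl rfl⟩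
    intro h; have := congrArg Fin.val h; simp at this; omega
  · intro i
    apply hf
    have h1 := Nat.mod_lt i hpos
    rcases Nat.lt_or_ge (i % (2 * k) + 1) (2 * k) with h2 | h2
    · have h3 : (i + 1) % (2 * k) = i % (2 * k) + 1 := by
        rw [Nat.add_mod, Nat.mod_eq_of_lt (a := 1) (by omega), Nat.mod_eq_of_lt h2]
      refine ⟨?_, ?_⟩
      · intro h; have := congrArg Fin.val h; simp [h3] at this
      · right; right; left; simp [h3]; omega
    · have h4 : i % (2 * k) = 2 * k - 1 := by omega
      have h3 : (i + 1) % (2 * k) = 0 := by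
        rw [Nat.add_mod, h4, Nat.mod_eq_of_lt (a := 1) (by omega)]
        rw [show 2 * k - 1 + 1 = 2 * k by omega, Nat.mod_self]
      refine ⟨?_, ?_⟩
      · intro h; have := congrArg Fin.val h; simp [h3, h4] at this; omega
      · right; right; right; right; right; simp [h3, h4]; omega
  · intro i j hij
    have := congrArg Fin.val (f.injective hij)
    simp at this; exact this
  · simp

/-- abstract wheel-freeness of the construction -/
lemma constr_free {V ι : Type*} [Fintype V] (H : SimpleGraph V) (k : ℕ) (hk : 2 ≤ k)
    (P : V → Prop) (κ : V → ι)
    (hκ : ∀ a b, P a → P b → H.Adj a b → κ a = κ b)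
    (hcomp : ∀ a, P a → (univ.filter (fun b => P b ∧ κ b = κ a)).card ≤ 2 * k - 2)
    (hdeg : ∀ a, P a → (univ.filter (fun b => P b ∧ H.Adj a b)).card ≤ k - 1)
    (w1 w2 : V) (hR : ∀ a b, ¬ P a → ¬ P b → H.Adj a b → (a = w1 ∧ b = w2) ∨ (a = w2 ∧ b = w1)) :
    ¬ ContainsCopy (wheelGraph (2 * k + 1)) H := by
  intro hw
  obtain ⟨c, g, hcg, hgg, hinj, h0⟩ := rim_of_wheel H k hk hw
  have hpos : 0 < 2 * k := by omega
  by_cases hc : P c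
  · -- centre in L
    set I := (range (2 * k)).filter (fun i => ¬ P (g i)) with hI
    set J := (range (2 * k)).filter (fun i => P (g i)) with hJ
    have hIJ : J.card + I.card = 2 * k := by
      rw [hI, hJ, Finset.card_filter_add_card_filter_not, card_range]
    have hJc : J.card ≤ k - 1 := by
      refine le_trans ?_ (hdeg c hc)
      apply Finset.card_le_card_of_injOn g
      · intro i hi
        simp only [hJ, coe_filter, Set.mem_ofPred_eq, mem_range] at hi
        simp [hi.2, hcg i]
      · intro i hi j hj hij
        simp only [hJ, coe_filter, Set.mem_ofPred_eq, mem_range] at hi hj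
        have := hinj i j hij
        rwa [Nat.mod_eq_of_lt hi.1, Nat.mod_eq_of_lt hj.1] at this
    set I' := I.filter (fun i => ¬ P (g (i + 1))) with hI'
    have hI'c : I'.card ≤ 1 := by
      rw [Finset.card_le_one]
      intro i hi j hj
      simp only [hI', hI, mem_filter, mem_range] at hi hj
      have mi := Nat.mod_eq_of_lt hi.1.1
      have mj := Nat.mod_eq_of_lt hj.1.1
      have bad : ∀ i j, i < 2 * k → j < 2 * k → g i = g (j + 1) → g (i + 1) = g j → False := by
        intro i j hi hj h1 h2
        have e1 := hinj _ _ h1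
        have e2 := hinj _ _ h2
        rw [Nat.mod_eq_of_lt hi] at e1
        rw [Nat.mod_eq_of_lt hj] at e2
        rcases Nat.lt_or_ge (j + 1) (2 * k) with q | q
        · rw [Nat.mod_eq_of_lt q] at e1
          rcases Nat.lt_or_ge (i + 1) (2 * k) with q' | q'
          · rw [Nat.mod_eq_of_lt q'] at e2; omega
          · rw [show i + 1 = 2 * k by omega, Nat.mod_self] at e2; omega
        · rw [show j + 1 = 2 * k by omega, Nat.mod_self] at e1
          subst e1
          rw [Nat.mod_eq_of_lt (by omega)] at e2; omega
      rcases hR _ _ hi.1.2 hi.2 (hgg i) with ⟨a1, a2⟩ | ⟨a1, a2⟩ <;>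
      rcases hR _ _ hj.1.2 hj.2 (hgg j) with ⟨b1, b2⟩ | ⟨b1, b2⟩
      · have := hinj i j (a1.trans b1.symm); omega
      · exact (bad i j hi.1.1 hj.1.1 (a1.trans b2.symm) (a2.trans b1.symm)).elim
      · exact (bad i j hi.1.1 hj.1.1 (a1.trans b2.symm) (a2.trans b1.symm)).elim
      · have := hinj i j (a1.trans b1.symm); omega
    have hsub : (I.filter (fun i => P (g (i + 1)))).card ≤ J.card := by
      apply Finset.card_le_card_of_injOn (fun i => (i + 1) % (2 * k))
      · intro i hi
        simp only [coe_filter, Set.mem_ofPred_eq, hI, mem_filter, mem_range] at hi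
        have hm := Nat.mod_lt (i + 1) hpos
        simp only [hJ, coe_filter, Set.mem_ofPred_eq, mem_range, hm, true_and]
        rcases Nat.lt_or_ge (i + 1) (2 * k) with q | q
        · rw [Nat.mod_eq_of_lt q]; exact hi.2
        · by_contra hcon
          -- g 0 vs the last vertex
          have e : i + 1 = 2 * k := by omega
          rw [e, Nat.mod_self] at hcon
          rw [e, h0] at hi; exact hcon hi.2
      · intro i hi j hj hij
        simp only [coe_filter, Set.mem_ofPred_eq, hI, mem_filter, mem_range] at hi hj
        simp only at hij
        rcases Nat.lt_or_ge (i + 1) (2 * k) with q | q <;> rcases Nat.lt_or_ge (j + 1) (2 * k) with q' | q'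
        · rw [Nat.mod_eq_of_lt q, Nat.mod_eq_of_lt q'] at hij; omega
        · rw [Nat.mod_eq_of_lt q, show j + 1 = 2 * k by omega, Nat.mod_self] at hij; omega
        · rw [Nat.mod_eq_of_lt q', show i + 1 = 2 * k by omega, Nat.mod_self] at hij; omega
        · omega
    have hsplit : (I.filter (fun i => P (g (i + 1)))).card + I'.card = I.card :=
      Finset.card_filter_add_card_filter_not _
    omega
  · -- centre in R
    have hex : ∃ j, ∀ i, 1 ≤ i → i < 2 * k → P (g (j + i)) := by
      by_cases hj : ∃ j, ¬ P (g j)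
      · obtain ⟨j, hj⟩ := hj
        refine ⟨j, fun i h1 h2 => ?_⟩
        by_contra hcon
        have e : g (j + i) = g j := by
          rcases hR _ _ hc hj (hcg j) with ⟨a1, a2⟩ | ⟨a1, a2⟩ <;>
          rcases hR _ _ hc hcon (hcg _) with ⟨b1, b2⟩ | ⟨b1, b2⟩
          · rw [a2, b2]
          · rw [a2, b2, ← a1, ← b1]
          · rw [a2, b2, ← a1, ← b1]
          · rw [a2, b2]
        have := hinj _ _ e
        have h3 : (j + i) % (2 * k) = (j + 0) % (2 * k) := by simpa using this
        have h4 : i % (2 * k) = 0 % (2 * k) := Nat.ModEq.add_left_cancel' j h3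
        rw [Nat.mod_eq_of_lt h2, Nat.zero_mod] at h4
        omega
      · push Not at hj
        exact ⟨0, fun i _ _ => hj _⟩
    obtain ⟨j, hj⟩ := hex
    have hsame : ∀ i, i < 2 * k - 1 → κ (g (j + (1 + i))) = κ (g (j + 1)) := by
      intro i
      induction i with
      | zero => intro _; rfl
      | succ i ih =>
        intro hi
        rw [← ih (by omega)]
        exact hκ _ _ (hj _ (by omega) (by omega)) (hj _ (by omega) (by omega)) (hgg (j + (1 + i))).symm
    have h1 := hcomp _ (hj 1 (by omega) (by omega))
    have h2 : (range (2 * k - 1)).card ≤ (univ.filter (fun b => P b ∧ κ b = κ (g (j + 1)))).card := by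
      apply Finset.card_le_card_of_injOn (fun i => g (j + (1 + i)))
      · intro i hi
        simp only [coe_range, Set.mem_Iio] at hi
        simp [hsame i hi, hj (1 + i) (by omega) (by omega)]
      · intro a ha b hb hab
        simp only [coe_range, Set.mem_Iio] at ha hb
        have h3 := hinj _ _ hab
        have h4 : (1 + a) % (2 * k) = (1 + b) % (2 * k) := Nat.ModEq.add_left_cancel' j h3
        rw [Nat.mod_eq_of_lt (by omega), Nat.mod_eq_of_lt (by omega)] at h4
        omega
    rw [card_range] at h2
    omega

end ABWheel


section ABConstr
open scoped Classical
open Finset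

lemma constr_QF {V : Type*} [Fintype V] (H : SimpleGraph V) (d l r : ℕ) (P : V → Prop)
    (hl : (univ.filter P).card = l) (hr : (univ.filter (fun v => ¬ P v)).card = r)
    (hdeg : ∀ a, P a → (univ.filter (fun b => P b ∧ H.Adj a b)).card = d)
    (hcross : ∀ a b, P a → ¬ P b → H.Adj a b)
    (w1 w2 : V) (hw1 : ¬ P w1) (hw2 : ¬ P w2) (hw : H.Adj w1 w2) (p q : ℝ) (hp : 0 ≤ p)
    (hq : 0 ≤ q) :
    p ^ 2 * d * l + 2 * p * q * l * r + 2 * q ^ 2 ≤ QF H (fun v => if P v then p else q) := by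
  unfold QF
  set y : V → ℝ := fun v => if P v then p else q with hy
  have hyP : ∀ v, P v → y v = p := fun v h => by simp [hy, h]
  have hyN : ∀ v, ¬ P v → y v = q := fun v h => by simp [hy, h]
  have h1 : ∀ v, P v → ∑ u ∈ nb H univ v, y u = d * p + r * q := by
    intro v hv
    rw [← Finset.sum_filter_add_sum_filter_not _ P]
    have e1 : (nb H univ v).filter P = univ.filter (fun b => P b ∧ H.Adj v b) := by
      ext u; simp [nb]; tauto
    have e2 : (nb H univ v).filter (fun u => ¬ P u) = univ.filter (fun u => ¬ P u) := by
      ext u; simp only [nb, mem_filter, mem_univ, true_and]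
      exact ⟨fun h => h.2, fun h => ⟨hcross v u hv h, h⟩⟩
    have e3 : ∑ u ∈ univ.filter (fun b => P b ∧ H.Adj v b), y u = d * p := by
      rw [Finset.sum_congr rfl (g := fun _ => p)]
      · simp [hdeg v hv]
      · intro u hu; exact hyP u (mem_filter.1 hu).2.1
    have e4 : ∑ u ∈ univ.filter (fun u => ¬ P u), y u = r * q := by
      rw [Finset.sum_congr rfl (g := fun _ => q)]
      · simp [hr]
      · intro u hu; exact hyN u (mem_filter.1 hu).2
    rw [e1, e2, e3, e4]
  have h2 : ∀ v, ¬ P v → l * p + (if v = w1 ∨ v = w2 then q else 0) ≤ ∑ u ∈ nb H univ v, y u := by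
    intro v hv
    rw [← Finset.sum_filter_add_sum_filter_not _ P]
    have e1 : (nb H univ v).filter P = univ.filter P := by
      ext u; simp only [nb, mem_filter, mem_univ, true_and]
      exact ⟨fun h => h.2, fun h => ⟨(hcross u v h hv).symm, h⟩⟩
    have e3 : ∑ u ∈ univ.filter P, y u = l * p := by
      rw [Finset.sum_congr rfl (g := fun _ => p)]
      · simp [hl]
      · intro u hu; exact hyP u (by simpa using hu)
    rw [e1, e3]
    gcongr
    have hy0 : ∀ u, 0 ≤ y u := fun u => by simp only [hy]; split_ifs <;> assumption
    split_ifs with hvw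
    · rcases hvw with rfl | rfl
      · calc q = y w2 := (hyN _ hw2).symm
          _ ≤ _ := Finset.single_le_sum (f := y) (fun u _ => hy0 u) (by simp [nb, hw, hw2])
      · calc q = y w1 := (hyN _ hw1).symm
          _ ≤ _ := Finset.single_le_sum (f := y) (fun u _ => hy0 u) (by simp [nb, hw.symm, hw1])
    · exact Finset.sum_nonneg (fun u _ => hy0 u)
  rw [← Finset.sum_filter_add_sum_filter_not univ P]
  have h3 : ∑ v ∈ univ.filter P, y v * ∑ u ∈ nb H univ v, y u = l * (p * (d * p + r * q)) := by
    rw [Finset.sum_congr rfl (g := fun _ => p * (d * p + r * q))]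
    · simp [hl]
    · intro u hu
      have : P u := by simpa using hu
      rw [hyP u this, h1 u this]
  have h4 : r * (q * (l * p)) + 2 * q ^ 2 ≤
      ∑ v ∈ univ.filter (fun v => ¬ P v), y v * ∑ u ∈ nb H univ v, y u := by
    calc r * (q * (l * p)) + 2 * q ^ 2
        = ∑ v ∈ univ.filter (fun v => ¬ P v), (q * (l * p) + (if v = w1 ∨ v = w2 then q ^ 2 else 0)) := by
          rw [Finset.sum_add_distrib, ← Finset.sum_filter]
          have : (univ.filter (fun v => ¬ P v)).filter (fun v => v = w1 ∨ v = w2) = {w1, w2} := by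
            ext v; simp only [mem_filter, mem_univ, true_and, mem_insert, mem_singleton]
            constructor
            · exact fun h => h.2
            · rintro (rfl | rfl)
              · exact ⟨hw1, Or.inl rfl⟩
              · exact ⟨hw2, Or.inr rfl⟩
          rw [this]
          simp [hr, Finset.card_pair hw.ne]
      _ ≤ _ := by
          apply Finset.sum_le_sum
          intro v hv
          have hv' : ¬ P v := by simpa using hv
          rw [hyN v hv']
          have := mul_le_mul_of_nonneg_left (h2 v hv') hq
          refine le_trans (le_of_eq ?_) this
          split_ifs <;> ring
  rw [h3]
  calc _ = l * (p * (d * p + r * q)) + (r * (q * (l * p)) + 2 * q ^ 2) := by ring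
    _ ≤ _ := by gcongr

lemma lam1_lt {n : ℕ} (hn : 0 < n) (G : SimpleGraph (Fin n)) : lam1 G ≤ n - 1 := by
  obtain ⟨⟨x, hx0, ⟨z, hz⟩, hx1, hx⟩, -⟩ := spec_exists hn G
  have h1 := hx z
  rw [hz, mul_one] at h1
  rw [h1]
  calc ∑ u ∈ nb G univ z, x u ≤ ∑ u ∈ nb G univ z, (1 : ℝ) := Finset.sum_le_sum (fun u _ => hx1 u)
    _ = ((nb G univ z).card : ℝ) := by simp
    _ ≤ ((univ.erase z).card : ℝ) := by
        norm_cast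
        apply Finset.card_le_card
        intro u hu
        rw [mem_nb] at hu
        exact mem_erase.2 ⟨hu.2.ne', mem_univ _⟩
    _ = n - 1 := by
        rw [Finset.card_erase_of_mem (mem_univ _), card_univ, Fintype.card_fin, Nat.cast_sub hn]
        simp

/-- the vertex type of the construction -/
abbrev CL (a b k : ℕ) := (Fin a × Fin k) ⊕ (Fin b × (Fin (k - 1) × Bool))

/-- adjacency inside the left part -/
def cAdjL {a b k : ℕ} : CL a b k → CL a b k → Prop
  | Sum.inl x, Sum.inl y => x.1 = y.1 ∧ x.2 ≠ y.2
  | Sum.inr x, Sum.inr y => x.1 = y.1 ∧ x.2.2 ≠ y.2.2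
  | _, _ => False

/-- adjacency of the construction -/
def cAdj {a b k r : ℕ} : CL a b k ⊕ Fin r → CL a b k ⊕ Fin r → Prop
  | Sum.inl x, Sum.inl y => cAdjL x y
  | Sum.inr x, Sum.inr y => x ≠ y ∧ x.val < 2 ∧ y.val < 2
  | _, _ => True

/-- the construction -/
def cGraph (a b k r : ℕ) : SimpleGraph (CL a b k ⊕ Fin r) where
  Adj := cAdj
  symm := by
    constructor
    rintro ((x | x) | x) ((y | y) | y) h <;> simp only [cAdj, cAdjL] at h ⊢ <;> tauto
  loopless := by
    constructor
    rintro ((x | x) | x) h <;> simp [cAdj, cAdjL] at h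

/-- left part -/
def cP {a b k r : ℕ} (v : CL a b k ⊕ Fin r) : Prop := v.isLeft = true

/-- component label -/
def cLab {a b k r : ℕ} : CL a b k ⊕ Fin r → Option (Fin a ⊕ Fin b)
  | Sum.inl (Sum.inl x) => some (Sum.inl x.1)
  | Sum.inl (Sum.inr x) => some (Sum.inr x.1)
  | Sum.inr _ => none

lemma cGraph_deg (a b k r : ℕ) (v : CL a b k ⊕ Fin r) (hv : cP v) :
    (univ.filter (fun u : CL a b k ⊕ Fin r => cP u ∧ (cGraph a b k r).Adj v u)).card = k - 1 := by
  rcases v with (⟨i, p⟩ | ⟨i, p, s⟩) | v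
  · have h0 : ((univ.erase p).image (fun q : Fin k => (Sum.inl (Sum.inl (i, q)) : CL a b k ⊕ Fin r))).card = k - 1 := by
      rw [Finset.card_image_of_injective, Finset.card_erase_of_mem (mem_univ _)]
      · simp
      · intro x y h; simpa using h
    refine Eq.trans (congrArg Finset.card ?_) h0
    ext u
    rw [mem_filter, mem_image]
    constructor
    · rintro ⟨-, h1, h2⟩
      rcases u with (⟨j, q⟩ | ⟨j, q, t⟩) | u
      · obtain ⟨h3, h4⟩ := (show i = j ∧ p ≠ q from h2)
        subst h3
        exact ⟨q, mem_erase.2 ⟨h4.symm, mem_univ _⟩, rfl⟩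
      · exact (show False from h2).elim
      · simp [cP] at h1
    · rintro ⟨q, hq, rfl⟩
      refine ⟨mem_univ _, rfl, ?_⟩
      show i = i ∧ p ≠ q
      exact ⟨rfl, (mem_erase.1 hq).1.symm⟩
  · have h0 : ((univ : Finset (Fin (k - 1))).image (fun q : Fin (k - 1) => (Sum.inl (Sum.inr (i, q, !s)) : CL a b k ⊕ Fin r))).card = k - 1 := by
      rw [Finset.card_image_of_injective]
      · simp
      · intro x y h; simpa using h
    refine Eq.trans (congrArg Finset.card ?_) h0
    ext u
    rw [mem_filter, mem_image]
    constructor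
    · rintro ⟨-, h1, h2⟩
      rcases u with (⟨j, q⟩ | ⟨j, q, t⟩) | u
      · exact (show False from h2).elim
      · obtain ⟨h3, h4⟩ := (show i = j ∧ s ≠ t from h2)
        subst h3
        refine ⟨q, mem_univ _, ?_⟩
        have : (!s) = t := by cases s <;> cases t <;> simp at h4 ⊢
        rw [this]
      · simp [cP] at h1
    · rintro ⟨q, hq, rfl⟩
      refine ⟨mem_univ _, rfl, ?_⟩
      show i = i ∧ s ≠ (!s)
      exact ⟨rfl, by cases s <;> simp⟩
  · simp [cP] at hv

lemma cGraph_comp (a b k r : ℕ) (hk : 2 ≤ k) (v : CL a b k ⊕ Fin r) (hv : cP v) :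
    (univ.filter (fun u : CL a b k ⊕ Fin r => cP u ∧ cLab u = cLab v)).card ≤ 2 * k - 2 := by
  rcases v with (⟨i, p⟩ | ⟨i, p, s⟩) | v
  · have h0 : ((univ).image (fun q : Fin k => (Sum.inl (Sum.inl (i, q)) : CL a b k ⊕ Fin r))).card ≤ 2 * k - 2 := by
      refine le_trans Finset.card_image_le ?_
      simp; omega
    refine le_trans (Finset.card_le_card ?_) h0
    intro u hu
    obtain ⟨-, h1, h2⟩ := mem_filter.1 hu
    rw [mem_image]
    rcases u with (⟨j, q⟩ | ⟨j, q, t⟩) | u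
    · have h3 : some (Sum.inl j) = some (Sum.inl (β := Fin b) i) := h2
      have h4 : j = i := Sum.inl.inj (Option.some.inj h3)
      subst h4
      exact ⟨q, mem_univ _, rfl⟩
    · have h3 : some (Sum.inr j) = some (Sum.inl (β := Fin b) i) := h2
      cases Option.some.inj h3
    · simp [cP] at h1
  · have h0 : ((univ).image (fun q : Fin (k - 1) × Bool => (Sum.inl (Sum.inr (i, q)) : CL a b k ⊕ Fin r))).card ≤ 2 * k - 2 := by
      refine le_trans Finset.card_image_le ?_
      simp; omega
    refine le_trans (Finset.card_le_card ?_) h0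
    intro u hu
    obtain ⟨-, h1, h2⟩ := mem_filter.1 hu
    rw [mem_image]
    rcases u with (⟨j, q⟩ | ⟨j, q, t⟩) | u
    · have h3 : some (Sum.inl j) = some (Sum.inr (α := Fin a) i) := h2
      cases Option.some.inj h3
    · have h3 : some (Sum.inr j) = some (Sum.inr (α := Fin a) i) := h2
      have h4 : j = i := Sum.inr.inj (Option.some.inj h3)
      subst h4
      exact ⟨(q, t), mem_univ _, rfl⟩
    · simp [cP] at h1
  · simp [cP] at hv

lemma cGraph_free (a b k r : ℕ) (hk : 2 ≤ k) (hr : 2 ≤ r) :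
    ¬ ContainsCopy (wheelGraph (2 * k + 1)) (cGraph a b k r) := by
  refine constr_free (cGraph a b k r) k hk cP cLab ?_ ?_ ?_ (Sum.inr ⟨0, by omega⟩) (Sum.inr ⟨1, by omega⟩) ?_
  · rintro ((⟨j, q⟩ | ⟨j, q, t⟩) | u) ((⟨j', q'⟩ | ⟨j', q', t'⟩) | u') <;>
      simp [cP, cGraph, cAdj, cAdjL, cLab] <;> tauto
  · intro v hv
    have := cGraph_comp a b k r hk v hv
    convert this
  · intro v hv; exact (cGraph_deg a b k r v hv).le
  · rintro (u | u) (u' | u') <;> simp [cP, cGraph, cAdj, Fin.ext_iff]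
    omega

lemma lower_exists (k : ℕ) (hk : 3 ≤ k) : ∃ N : ℕ, ∀ n, N ≤ n → ∃ H : SimpleGraph (Fin n),
    WheelFree (2 * k + 1) H ∧ ∃ l r : ℕ, l + r = n ∧ l ≤ r + 2 ∧ r ≤ l + 2 ∧ 0 < lam1 H ∧
      (l : ℝ) * r + 1 ≤ lam1 H * (lam1 H - (k - 1)) := by
  refine ⟨4 * k * k + 4 * k + 8, fun n hn => ?_⟩
  set m := (n + 2) / 4 with hm
  have hm1 : k * k + 1 ≤ m := by
    have : (4 * (k * k) + 4 * k + 8 : ℕ) ≤ n := by rw [← mul_assoc]; exact hn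
    omega
  obtain ⟨a', b, hab⟩ : ∃ a' b, m = a' * k + b * (k - 1) := by
    have hlt := Nat.mod_lt m (show 0 < k by omega)
    have hdm := Nat.div_add_mod m k
    have hq : k ≤ m / k := by
      rw [Nat.le_div_iff_mul_le (by omega)]; omega
    refine ⟨m / k + 1 + m % k - k, k - m % k, ?_⟩
    obtain ⟨k', rfl⟩ : ∃ k', k = k' + 1 := ⟨k - 1, by omega⟩
    set t := m % (k' + 1)
    set q := m / (k' + 1)
    have e1 : q + 1 + t - (k' + 1) = q - (k' + 1 - t) + 1 := by omega
    obtain ⟨s, hs⟩ : ∃ s, k' + 1 = t + s := ⟨k' + 1 - t, by omega⟩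
    have e2 : k' + 1 - t = s := by omega
    obtain ⟨q', hq'⟩ : ∃ q', q = q' + s := ⟨q - s, by omega⟩
    rw [e1, e2, hq']
    simp only [Nat.add_sub_cancel]
    rw [← hdm, hq']
    have e3 : t + s = k' + 1 := hs.symm
    nlinarith
  set r := n - 2 * m with hr
  have hr2 : 2 ≤ r := by omega
  have hcardL : Fintype.card (CL (2 * a') b k) = 2 * m := by
    simp [CL]; rw [hab]; ring
  have hcard : Fintype.card (CL (2 * a') b k ⊕ Fin r) = Fintype.card (Fin n) := by
    rw [Fintype.card_sum, hcardL]; simp; omega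
  let e := Fintype.equivOfCardEq hcard
  set C := cGraph (2 * a') b k r with hC
  let H : SimpleGraph (Fin n) := C.comap e.symm
  have hn0 : 0 < n := by omega
  refine ⟨H, ?_, 2 * m, r, by omega, by omega, by omega, ?_⟩
  · rintro ⟨f, hf⟩
    apply cGraph_free (2 * a') b k r (by omega) hr2
    exact ⟨f.trans e.symm.toEmbedding, fun a b h => hf a b h⟩
  have hQ : ∀ y : CL (2 * a') b k ⊕ Fin r → ℝ, QF H (fun v => y (e.symm v)) = QF C y := by
    intro y
    unfold QF
    rw [← Equiv.sum_comp e.symm]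
    apply Finset.sum_congr rfl
    intro v _
    congr 1
    symm
    apply Finset.sum_bij (fun u _ => e u)
    · intro u hu
      rw [mem_nb] at hu ⊢
      refine ⟨mem_univ _, ?_⟩
      show C.Adj _ _
      simpa using hu.2
    · intro u _ u' _ h; exact e.injective h
    · intro u hu
      rw [mem_nb] at hu
      exact ⟨e.symm u, mem_nb.2 ⟨mem_univ _, hu.2⟩, by simp⟩
    · intro u _; simp
  obtain ⟨-, hall⟩ := spec_exists hn0 H
  set lam := lam1 H
  have hlL : (univ.filter (fun v : CL (2 * a') b k ⊕ Fin r => cP v)).card = 2 * m := by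
    have h0 : ((univ : Finset (CL (2 * a') b k)).map (Function.Embedding.inl (β := Fin r))).card = 2 * m := by
      rw [card_map, card_univ, hcardL]
    refine Eq.trans (congrArg Finset.card ?_) h0
    ext v; rw [mem_filter]; rcases v with v | v <;> simp [cP]
  have hlR : (univ.filter (fun v : CL (2 * a') b k ⊕ Fin r => ¬ cP v)).card = r := by
    have h0 : ((univ : Finset (Fin r)).map (Function.Embedding.inr (α := CL (2 * a') b k))).card = r := by simp
    refine Eq.trans (congrArg Finset.card ?_) h0
    ext v; rcases v with v | v <;> simp [cP]
  have key : ∀ p q : ℝ, 0 ≤ p → 0 ≤ q → p ^ 2 * (k - 1) * (2 * m) + 2 * p * q * (2 * m) * r + 2 * q ^ 2 ≤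
      lam * (p ^ 2 * (2 * m) + q ^ 2 * r) := by
    intro p q hp hq
    have h1 := constr_QF C (k - 1) (2 * m) r cP hlL hlR
      (cGraph_deg _ _ _ _) (by
        rintro (u | u) (u' | u') <;> simp [cP, hC, cGraph, cAdj])
      (Sum.inr ⟨0, by omega⟩) (Sum.inr ⟨1, by omega⟩) (by simp [cP]) (by simp [cP])
      (by simp [hC, cGraph, cAdj]) p q hp hq
    rw [← hQ] at h1
    have h2 := hall (fun v => (fun v : CL (2 * a') b k ⊕ Fin r => if cP v then p else q) (e.symm v))
    have h3 : ∑ v, ((fun v : CL (2 * a') b k ⊕ Fin r => if cP v then p else q) (e.symm v)) ^ 2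
        = p ^ 2 * (2 * m) + q ^ 2 * r := by
      rw [Equiv.sum_comp e.symm (fun v => ((fun v : CL (2 * a') b k ⊕ Fin r => if cP v then p else q) v) ^ 2)]
      rw [← Finset.sum_filter_add_sum_filter_not univ (fun v => cP v)]
      rw [Finset.sum_congr rfl (g := fun _ => p ^ 2), Finset.sum_congr (s₁ := univ.filter (fun v : CL (2 * a') b k ⊕ Fin r => ¬ cP v)) rfl (g := fun _ => q ^ 2)]
      · rw [Finset.sum_const, Finset.sum_const, hlL, hlR]; simp; ring
      · intro u hu
        have : ¬ cP u := (mem_filter.1 hu).2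
        simp only [if_neg this]
      · intro u hu
        have : cP u := (mem_filter.1 hu).2
        simp only [if_pos this]
    rw [h3] at h2
    have h4 := h1.trans h2
    have hk1 : ((k - 1 : ℕ) : ℝ) = (k : ℝ) - 1 := by
      rw [Nat.cast_sub (by omega)]; simp
    rw [hk1] at h4
    push_cast at h4
    exact h4
  have hmpos : (0 : ℝ) < m := by
    have : 0 < m := by omega
    exact_mod_cast this
  have hrpos : (0 : ℝ) < r := by
    have : 0 < r := by omega
    exact_mod_cast this
  have hkr : (3 : ℝ) ≤ k := by exact_mod_cast hk
  have hlpos : 0 < lam := by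
    have h := key 1 1 (by norm_num) (by norm_num)
    by_contra hcon
    push Not at hcon
    have h2 : lam * (1 ^ 2 * (2 * m) + 1 ^ 2 * r) ≤ 0 :=
      mul_nonpos_of_nonpos_of_nonneg hcon (by positivity)
    have h3 : 0 < (1 : ℝ) ^ 2 * (k - 1) * (2 * m) := by
      have : (0 : ℝ) < k - 1 := by linarith
      positivity
    have h4 : 0 < (2 : ℝ) * 1 * 1 * (2 * m) * r := by positivity
    linarith
  refine ⟨hlpos, ?_⟩
  have h := key lam (2 * m) hlpos.le (by positivity)
  have hle : lam ≤ 4 * m := by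
    have h1 := lam1_lt hn0 H
    have : n ≤ 4 * m + 1 := by omega
    have := (Nat.cast_le (α := ℝ)).2 this
    push_cast at this; linarith
  have h5 : lam ^ 2 * (k - 1) + lam * (2 * m) * r + 2 * (2 * m) ≤ lam ^ 3 := by
    have h6 : (2 * (m : ℝ)) * (lam ^ 2 * (k - 1) + lam * (2 * m) * r + 2 * (2 * m)) ≤ (2 * m) * lam ^ 3 := by
      nlinarith
    exact le_of_mul_le_mul_left h6 (by positivity)
  push_cast
  have h7 : lam * ((2 * m) * r + 1) ≤ lam * (lam * (lam - (k - 1))) := by nlinarith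
  exact le_of_mul_le_mul_left h7 hlpos

end ABConstr


section ABBlock
open scoped Classical
open Finset

/-- interleave vertices with blocks -/
def blk {V : Type*} : List V → List (List V) → List V
  | u :: us, Q :: Qs => u :: (Q ++ blk us Qs)
  | _, _ => []

lemma blk_perm {V : Type*} : ∀ (us : List V) (Qs : List (List V)), us.length = Qs.length →
    (blk us Qs).Perm (us ++ Qs.flatten)
  | [], [], _ => by simp [blk]
  | [], _ :: _, h => by simp at h
  | _ :: _, [], h => by simp at h
  | u :: us, Q :: Qs, h => by
    have ih := blk_perm us Qs (by simpa using h)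
    simp only [blk, List.flatten_cons, List.cons_append]
    apply List.Perm.cons
    calc (Q ++ blk us Qs).Perm (Q ++ (us ++ Qs.flatten)) := ih.append_left Q
      _ = (Q ++ us) ++ Qs.flatten := by simp
      _ |>.Perm ((us ++ Q) ++ Qs.flatten) := (List.perm_append_comm).append_right _
      _ = us ++ (Q ++ Qs.flatten) := by simp

lemma blk_head {V : Type*} : ∀ (us : List V) (Qs : List (List V)), ∀ a ∈ (blk us Qs).head?, a ∈ us
  | [], [], a, h => by simp [blk] at h
  | [], _ :: _, a, h => by simp [blk] at h
  | _ :: _, [], a, h => by simp [blk] at h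
  | u :: us, Q :: Qs, a, h => by
    simp [blk] at h; simp [h]

lemma blk_last {V : Type*} : ∀ (us : List V) (Qs : List (List V)), (∀ Q ∈ Qs, Q ≠ []) →
    us.length = Qs.length → ∀ a ∈ (blk us Qs).getLast?, ∃ Q ∈ Qs, a ∈ Q
  | [], [], _, _, a, h => by simp [blk] at h
  | [], _ :: _, _, _, a, h => by simp [blk] at h
  | _ :: _, [], _, _, a, h => by simp [blk] at h
  | u :: us, Q :: Qs, hne, hl, a, h => by
    by_cases hb : blk us Qs = []
    · have hQ : Q ≠ [] := hne Q (by simp)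
      simp only [blk, hb, List.append_nil] at h
      rw [List.getLast?_cons_of_ne_nil hQ] at h
      exact ⟨Q, by simp, List.mem_of_getLast? h⟩
    · have h1 : (blk (u :: us) (Q :: Qs)).getLast? = (blk us Qs).getLast? := by
        simp only [blk]
        rw [← List.cons_append, List.getLast?_append_of_ne_nil _ hb]
      rw [h1] at h
      obtain ⟨Q', h2, h3⟩ := blk_last us Qs (fun Q' hQ' => hne Q' (by simp [hQ'])) (by simpa using hl) a h
      exact ⟨Q', by simp [h2], h3⟩

lemma blk_chain {V : Type*} (r : V → V → Prop) (hs : ∀ a b, r a b → r b a) : ∀ (us : List V) (Qs : List (List V)),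
    (∀ Q ∈ Qs, Q ≠ []) → (∀ Q ∈ Qs, Q.IsChain r) →
    (∀ u ∈ us, ∀ Q ∈ Qs, ∀ q ∈ Q, r u q) → (blk us Qs).IsChain r
  | [], [], _, _, _ => by simp [blk]
  | [], _ :: _, _, _, _ => by simp [blk]
  | _ :: _, [], _, _, _ => by simp [blk]
  | u :: us, Q :: Qs, hne, hc, ha => by
    have ih := blk_chain r hs us Qs (fun Q' hQ' => hne Q' (by simp [hQ'])) (fun Q' hQ' => hc Q' (by simp [hQ']))
      (fun v hv Q' hQ' => ha v (by simp [hv]) Q' (by simp [hQ']))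
    simp only [blk]
    rw [List.isChain_cons, List.isChain_append]
    have hQ : Q ≠ [] := hne Q (by simp)
    refine ⟨?_, hc Q (by simp), ih, ?_⟩
    · intro y hy
      have : y ∈ Q := by
        cases Q with
        | nil => exact absurd rfl hQ
        | cons q Q => simp at hy; simp [hy]
      exact ha u (by simp) Q (by simp) y this
    · intro a h1 b h2
      apply hs
      exact ha b (by simp [blk_head us Qs b h2]) Q (by simp) a (List.mem_of_getLast? h1)

lemma block_wheel {V : Type*} (G : SimpleGraph V) (k : ℕ) (hk : 2 ≤ k) (c : V) (us : List V)
    (Qs : List (List V)) (hlen : us.length = Qs.length) (hne : ∀ Q ∈ Qs, Q ≠ [])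
    (hch : ∀ Q ∈ Qs, Q.IsChain G.Adj) (hnd : (us ++ Qs.flatten).Nodup)
    (hadj : ∀ u ∈ us, ∀ Q ∈ Qs, ∀ q ∈ Q, G.Adj u q) (hc : ∀ u ∈ us, G.Adj c u)
    (hc2 : ∀ q ∈ Qs.flatten, G.Adj c q) (htot : us.length + Qs.flatten.length = 2 * k) :
    ContainsCopy (wheelGraph (2 * k + 1)) G := by
  have hp := blk_perm us Qs hlen
  refine wheel_of_list G k hk c (blk us Qs) ?_ (hp.nodup_iff.2 hnd)
    (blk_chain G.Adj (fun a b h => h.symm) us Qs hne hch hadj) ?_ ?_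
  · rw [hp.length_eq, List.length_append, htot]
  · intro a ha b hb
    obtain ⟨Q, hQ, haQ⟩ := blk_last us Qs hne hlen a ha
    exact (hadj b (blk_head us Qs b hb) Q hQ a haQ).symm
  · intro a ha
    rcases List.mem_append.1 (hp.mem_iff.1 ha) with h | h
    · exact hc a h
    · exact hc2 a h

lemma bip_wheel {V : Type*} (G : SimpleGraph V) (k : ℕ) (hk : 2 ≤ k) (c : V) (A B : Finset V)
    (hA : A.card = k) (hB : B.card = k) (hab : ∀ a ∈ A, ∀ b ∈ B, G.Adj a b)
    (hcA : ∀ a ∈ A, G.Adj c a) (hcB : ∀ a ∈ B, G.Adj c a) :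
    ContainsCopy (wheelGraph (2 * k + 1)) G := by
  have hfl : (B.toList.map (fun b => [b])).flatten = B.toList := by
    induction B.toList with
    | nil => rfl
    | cons a l ih => simp [ih]
  refine block_wheel G k hk c A.toList (B.toList.map (fun b => [b])) (by simp [hA, hB]) ?_ ?_ ?_ ?_ ?_ ?_ ?_
  · simp
  · simp
  · rw [hfl, List.nodup_append]
    refine ⟨A.nodup_toList, B.nodup_toList, ?_⟩
    intro a ha b hb h
    exact (hab a (by simpa using ha) b (by simpa using hb)).ne h
  · simpa using hab
  · simpa using hcA
  · rw [hfl]; simpa using hcB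
  · rw [hfl]; simp [hA, hB]; omega

lemma noninj_card (k n : ℕ) : (univ.filter (fun f : Fin (k + 1) → Fin n => ¬ Function.Injective f)).card
    ≤ (k + 1) * (k + 1) * n ^ k := by
  have h1 : univ.filter (fun f : Fin (k + 1) → Fin n => ¬ Function.Injective f) ⊆
      (univ.filter (fun p : Fin (k + 1) × Fin (k + 1) => p.1 ≠ p.2)).biUnion
        (fun p => univ.filter (fun f : Fin (k + 1) → Fin n => f p.1 = f p.2)) := by
    intro f hf
    have hf := (mem_filter.1 hf).2
    unfold Function.Injective at hf
    push Not at hf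
    obtain ⟨a, b, h, hne⟩ := hf
    simp only [mem_biUnion, mem_filter, mem_univ, true_and]
    exact ⟨(a, b), hne, h⟩
  refine (Finset.card_le_card h1).trans ?_
  refine (Finset.card_biUnion_le_card_mul _ _ (n ^ k) ?_).trans ?_
  · rintro ⟨i, j⟩ hp
    have hij : i ≠ j := by simpa using hp
    have : (univ : Finset (Fin k → Fin n)).card = n ^ k := by simp
    rw [← this]
    apply Finset.card_le_card_of_injOn (fun f => fun t => f (j.succAbove t)) (by simp)
    intro f hf g hg h
    simp only [coe_filter, mem_univ, true_and, Set.mem_ofPred_eq] at hf hg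
    funext t
    have h' : ∀ t, f (j.succAbove t) = g (j.succAbove t) := fun t => congrFun h t
    by_cases ht : t = j
    · subst ht
      rw [← hf, ← hg]
      obtain ⟨s, hs⟩ := Fin.exists_succAbove_eq hij
      rw [← hs]; exact h' s
    · obtain ⟨s, hs⟩ := Fin.exists_succAbove_eq ht
      rw [← hs]; exact h' s
  · gcongr
    refine (Finset.card_le_univ _).trans ?_
    simp

set_option maxHeartbeats 1000000 in
lemma kst (k : ℕ) (hk : 2 ≤ k) (η : ℝ) (hη : 0 < η) : ∃ N : ℕ, ∀ n, N ≤ n → ∀ G : SimpleGraph (Fin n),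
    WheelFree (2 * k + 1) G → ∀ v, ∑ a ∈ nb G univ v, ((nb G (nb G univ v) a).card : ℝ) ≤ η * (n : ℝ) ^ 2 := by
  obtain ⟨N, hN⟩ := exists_nat_gt (((k : ℝ) + k * k) / η ^ k)
  refine ⟨N + 1, fun n hn G hG v => ?_⟩
  by_contra hcon
  push Not at hcon
  set X := nb G univ v with hX
  have hn1 : 1 ≤ n := by omega
  have hnpos : (0 : ℝ) < n := by exact_mod_cast hn1
  obtain ⟨m, rfl⟩ : ∃ m, k = m + 1 := ⟨k - 1, by omega⟩
  have hXn : X.card ≤ n := by simpa using X.card_le_univ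
  have jen := pow_sum_le_card_mul_sum_pow (s := X) (f := fun a => ((nb G X a).card : ℝ))
    (fun i _ => Nat.cast_nonneg _) m
  let Fm : Finset (Fin (m + 1) → Fin n) := univ
  let T : (Fin (m + 1) → Fin n) → Finset (Fin n) := fun f => X.filter (fun a => ∀ i, f i ∈ nb G X a)
  have hdc : ∑ a ∈ X, (nb G X a).card ^ (m + 1) = ∑ f ∈ Fm, (T f).card := by
    have e1 : ∀ a, (nb G X a).card ^ (m + 1) =
        (Fm.filter (fun f => ∀ i, f i ∈ nb G X a)).card := by
      intro a
      have : (Fintype.piFinset (fun _ : Fin (m + 1) => nb G X a)).card = (nb G X a).card ^ (m + 1) := by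
        simp
      rw [← this]
      congr 1
      ext f; simp [Fm]
    simp only [e1, T]
    exact Finset.sum_card_bipartiteAbove_eq_sum_card_bipartiteBelow (fun (a : Fin n) (f : Fin (m + 1) → Fin n) => ∀ i, f i ∈ nb G X a)
  have hT1 : ∀ f, Function.Injective f → (T f).card ≤ m + 1 := by
    intro f hf
    by_contra hc
    push Not at hc
    obtain ⟨B, hB, hBc⟩ := Finset.exists_subset_card_eq hc.le
    apply hG
    have hmem : ∀ b ∈ B, b ∈ X ∧ ∀ i, f i ∈ nb G X b := fun b hb => mem_filter.1 (hB hb)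
    have hB0 : B.Nonempty := by rw [← Finset.card_pos]; omega
    obtain ⟨b0, hb0⟩ := hB0
    refine bip_wheel G (m + 1) hk v (univ.image f) B ?_ hBc ?_ ?_ ?_
    · rw [Finset.card_image_of_injective _ hf]; simp
    · intro a ha b hb
      obtain ⟨i, -, rfl⟩ := mem_image.1 ha
      exact (mem_nb.1 ((hmem b hb).2 i)).2.symm
    · intro a ha
      obtain ⟨i, -, rfl⟩ := mem_image.1 ha
      exact (mem_nb.1 (mem_nb.1 ((hmem b0 hb0).2 i)).1).2
    · intro b hb
      exact (mem_nb.1 (hmem b hb).1).2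
  have hup : ∑ f ∈ Fm, (T f).card ≤ (m + 1) * n ^ (m + 1) + ((m + 1) * (m + 1) * n ^ m) * n := by
    rw [← Finset.sum_filter_add_sum_filter_not Fm (fun f => Function.Injective f)]
    apply add_le_add
    · refine (Finset.sum_le_card_nsmul _ _ (m + 1) (fun f hf => hT1 f (mem_filter.1 hf).2)).trans ?_
      rw [smul_eq_mul, mul_comm]
      gcongr
      refine (Finset.card_le_univ _).trans ?_
      simp
    · refine (Finset.sum_le_card_nsmul _ _ n (fun f _ => ?_)).trans ?_
      · exact (Finset.card_le_card (Finset.filter_subset _ _)).trans hXn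
      · rw [smul_eq_mul]
        gcongr
        exact noninj_card m n
  clear_value Fm
  have hup' : (∑ a ∈ X, ((nb G X a).card : ℝ) ^ (m + 1)) ≤ ((m + 1 : ℝ) + (m + 1) * (m + 1)) * n ^ (m + 1) := by
    have h := hdc.trans_le hup
    have h' := (Nat.cast_le (α := ℝ)).2 h
    push_cast at h'
    refine h'.trans (le_of_eq ?_)
    ring
  have hlow : (η * (n : ℝ) ^ 2) ^ (m + 1) ≤ (n : ℝ) ^ m * (((m + 1 : ℝ) + (m + 1) * (m + 1)) * n ^ (m + 1)) := by
    calc (η * (n : ℝ) ^ 2) ^ (m + 1) ≤ (∑ a ∈ X, ((nb G X a).card : ℝ)) ^ (m + 1) := by gcongr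
      _ ≤ _ := jen
      _ ≤ _ := mul_le_mul (pow_le_pow_left₀ (Nat.cast_nonneg _) (Nat.cast_le.2 hXn) m) hup' (Finset.sum_nonneg (fun i _ => pow_nonneg (Nat.cast_nonneg _) _)) (pow_nonneg hnpos.le _)
  have h1 : (η ^ (m + 1) * n) * ((n : ℝ) ^ m * n ^ (m + 1)) ≤ ((m + 1 : ℝ) + (m + 1) * (m + 1)) * ((n : ℝ) ^ m * n ^ (m + 1)) := by
    refine le_trans (le_of_eq ?_) (hlow.trans (le_of_eq ?_))
    · rw [mul_pow, ← pow_mul]; ring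
    · ring
  have h2 := le_of_mul_le_mul_right h1 (by positivity)
  rw [div_lt_iff₀ (by positivity)] at hN
  push_cast at hN
  have h3 : (N : ℝ) ≤ n := by exact_mod_cast (by omega : N ≤ n)
  have h4 : (N : ℝ) * η ^ (m + 1) ≤ n * η ^ (m + 1) := by gcongr
  linarith

end ABBlock


section ABStruct
open scoped Classical
open Finset

lemma cut_eq {n : ℕ} (G : SimpleGraph (Fin n)) (S : Finset (Fin n)) :
    cutCount G S = ∑ v ∈ S, (nb G Sᶜ v).card := by
  unfold cutCount
  rw [← Finset.card_sigma]
  refine Finset.card_bij (fun p _ => (⟨p.1, p.2⟩ : Σ _ : Fin n, Fin n)) ?_ ?_ ?_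
  · intro p hp
    obtain ⟨-, h1, h2, h3⟩ := mem_filter.1 hp
    rw [mem_sigma]
    exact ⟨h2, mem_nb.2 ⟨mem_compl.2 h3, h1⟩⟩
  · rintro ⟨a, b⟩ _ ⟨c, d⟩ _ h
    simpa using h
  · rintro ⟨a, b⟩ h
    rw [mem_sigma] at h
    obtain ⟨h1, h2⟩ := mem_nb.1 h.2
    exact ⟨(a, b), mem_filter.2 ⟨mem_univ _, h2, h.1, mem_compl.1 h1⟩, rfl⟩

lemma cut_compl {n : ℕ} (G : SimpleGraph (Fin n)) (S : Finset (Fin n)) :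
    cutCount G Sᶜ = cutCount G S := by
  unfold cutCount
  refine Finset.card_bij (fun p _ => (p.2, p.1)) ?_ ?_ ?_
  · intro p hp
    obtain ⟨-, h1, h2, h3⟩ := mem_filter.1 hp
    rw [mem_filter]
    exact ⟨mem_univ _, h1.symm, by simpa using h3, by simpa using h2⟩
  · rintro ⟨a, b⟩ _ ⟨c, d⟩ _ h
    simp at h ⊢; tauto
  · rintro ⟨a, b⟩ hp
    obtain ⟨-, h1, h2, h3⟩ := mem_filter.1 hp
    exact ⟨(b, a), mem_filter.2 ⟨mem_univ _, h1.symm, by simpa using h3, by simpa using h2⟩, rfl⟩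

lemma move_ineq {n : ℕ} (G : SimpleGraph (Fin n)) (S : Finset (Fin n))
    (hmc : ∀ S', cutCount G S' ≤ cutCount G S) (v : Fin n) (hv : v ∈ S) :
    (nb G S v).card ≤ (nb G Sᶜ v).card := by
  have h1 := hmc (S.erase v)
  rw [cut_eq, cut_eq] at h1
  have h2 : ∀ u ∈ S.erase v, (nb G (S.erase v)ᶜ u).card = (nb G Sᶜ u).card + if G.Adj v u then 1 else 0 := by
    intro u hu
    split_ifs with h
    · have : nb G (S.erase v)ᶜ u = insert v (nb G Sᶜ u) := by
        ext w
        simp only [mem_nb, mem_compl, mem_erase, mem_insert]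
        constructor
        · rintro ⟨h1, h2⟩
          by_cases hw : w = v
          · exact Or.inl hw
          · exact Or.inr ⟨fun h => h1 ⟨hw, h⟩, h2⟩
        · rintro (rfl | ⟨h1, h2⟩)
          · exact ⟨by simp, h.symm⟩
          · exact ⟨fun h => h1 h.2, h2⟩
      rw [this, Finset.card_insert_of_notMem]
      simp [mem_nb, hv]
    · rw [add_zero]
      congr 1
      ext w
      simp only [mem_nb, mem_compl, mem_erase]
      constructor
      · rintro ⟨h1, h2⟩
        refine ⟨fun h' => h1 ⟨?_, h'⟩, h2⟩
        rintro rfl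
        exact h h2.symm
      · rintro ⟨h1, h2⟩
        exact ⟨fun h => h1 h.2, h2⟩
  rw [Finset.sum_congr rfl h2, Finset.sum_add_distrib, ← Finset.card_filter,
    ← Finset.add_sum_erase S _ hv] at h1
  have h3 : (S.erase v).filter (fun u => G.Adj v u) = nb G S v := by
    ext w
    simp only [mem_nb, mem_filter, mem_erase]
    constructor
    · tauto
    · rintro ⟨h1, h2⟩; exact ⟨⟨h2.ne', h1⟩, h2⟩
  rw [h3] at h1
  omega

lemma QF_split {n : ℕ} (H : SimpleGraph (Fin n)) (y : Fin n → ℝ) (v : Fin n) :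
    QF H y = 2 * (y v * ∑ u ∈ nb H univ v, y u) +
      ∑ a ∈ univ.erase v, y a * ∑ b ∈ nb H (univ.erase v) a, y b := by
  unfold QF
  rw [← Finset.add_sum_erase univ _ (mem_univ v), two_mul, add_assoc]
  congr 1
  have h1 : ∀ a ∈ univ.erase v, y a * ∑ u ∈ nb H univ a, y u =
      (if H.Adj v a then y v * y a else 0) + y a * ∑ b ∈ nb H (univ.erase v) a, y b := by
    intro a ha
    have h2 : nb H (univ.erase v) a = (nb H univ a).erase v := by
      ext w; simp only [mem_nb, mem_erase, mem_univ]; tauto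
    rw [h2]
    split_ifs with h
    · rw [← Finset.add_sum_erase (nb H univ a) _ (mem_nb.2 ⟨mem_univ _, h.symm⟩)]
      ring
    · rw [Finset.erase_eq_of_notMem, zero_add]
      rw [mem_nb]
      exact fun h' => h h'.2.symm
  rw [Finset.sum_congr rfl h1, Finset.sum_add_distrib, ← Finset.sum_filter]
  congr 1
  have h3 : (univ.erase v).filter (fun a => H.Adj v a) = nb H univ v := by
    ext w
    simp only [mem_nb, mem_filter, mem_erase, mem_univ, true_and]
    constructor
    · tauto
    · intro h; exact ⟨⟨h.ne', trivial⟩, h⟩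
  rw [h3, Finset.mul_sum]

/-- replace the neighbourhood of `v` by `T` -/
def repG {V : Type*} (G : SimpleGraph V) (v : V) (T : Finset V) : SimpleGraph V where
  Adj a b := a ≠ b ∧ ((a ≠ v ∧ b ≠ v ∧ G.Adj a b) ∨ (a = v ∧ b ∈ T) ∨ (b = v ∧ a ∈ T))
  symm := by
    constructor
    rintro a b ⟨h, h'⟩
    refine ⟨h.symm, ?_⟩
    rcases h' with h' | h' | h'
    · exact Or.inl ⟨h'.2.1, h'.1, h'.2.2.symm⟩
    · exact Or.inr (Or.inr h')
    · exact Or.inr (Or.inl h')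
  loopless := by
    constructor
    rintro a ⟨h, -⟩
    exact h rfl

lemma rep_free {n : ℕ} (t : ℕ) (G : SimpleGraph (Fin n)) (hG : WheelFree t G) (v : Fin n)
    (T : Finset (Fin n)) (hv : v ∉ T)
    (hT : ∀ W : Finset (Fin n), W.card ≤ t → ∃ v', v' ∉ W ∧ ∀ s ∈ W, s ∈ T → G.Adj v' s) :
    WheelFree t (repG G v T) := by
  rintro ⟨f, hf⟩
  apply hG
  obtain ⟨v', h1, h2⟩ := hT (univ.image f) (Finset.card_image_le.trans (by simp))
  have hW : ∀ a, f a ≠ v' := fun a h => h1 (mem_image.2 ⟨a, mem_univ _, h⟩)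
  refine ⟨f.trans (Equiv.swap v v').toEmbedding, fun a b hab => ?_⟩
  obtain ⟨h3, h4⟩ := hf a b hab
  simp only [Function.Embedding.trans_apply, Equiv.coe_toEmbedding]
  rcases h4 with ⟨ha, hb, h⟩ | ⟨ha, hb⟩ | ⟨hb, ha⟩
  · rwa [Equiv.swap_apply_of_ne_of_ne ha (hW a), Equiv.swap_apply_of_ne_of_ne hb (hW b)]
  · rw [ha, Equiv.swap_apply_left, Equiv.swap_apply_of_ne_of_ne (show f b ≠ v from fun h => hv (h ▸ hb)) (hW b)]
    exact h2 _ (mem_image_of_mem _ (mem_univ _)) hb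
  · rw [hb, Equiv.swap_apply_left, Equiv.swap_apply_of_ne_of_ne (show f a ≠ v from fun h => hv (h ▸ ha)) (hW a)]
    exact (h2 _ (mem_image_of_mem _ (mem_univ _)) ha).symm

lemma rep_ineq {n : ℕ} (t : ℕ) (G : SimpleGraph (Fin n)) (hG : IsSpexWheel t G) (x : Fin n → ℝ)
    (hx0 : ∀ v, 0 ≤ x v) (hlam : 0 < lam1 G)
    (hx : ∀ v, lam1 G * x v = ∑ u ∈ nb G univ v, x u) (v : Fin n) (T : Finset (Fin n)) (hv : v ∉ T)
    (hT : ∀ W : Finset (Fin n), W.card ≤ t → ∃ v', v' ∉ W ∧ ∀ s ∈ W, s ∈ T → G.Adj v' s) :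
    ∑ u ∈ T, x u ≤ lam1 G * x v := by
  have hn : 0 < n := v.pos
  have hfree := rep_free t G hG.1 v T hv hT
  have hle := hG.2 _ hfree
  obtain ⟨-, hall⟩ := spec_exists hn (repG G v T)
  set lam := lam1 G
  set τ := ∑ u ∈ T, x u with hτ
  have hτ0 : 0 ≤ τ := Finset.sum_nonneg (fun u _ => hx0 u)
  set s := τ / lam with hs
  set y := Function.update x v s with hy
  have hyv : y v = s := by simp [hy]
  have hyne : ∀ u, u ≠ v → y u = x u := fun u hu => by simp [hy, hu]
  have h1 := hall y
  rw [QF_split _ y v, hyv] at h1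
  have e1 : ∑ u ∈ nb (repG G v T) univ v, y u = τ := by
    have : nb (repG G v T) univ v = T := by
      ext u
      simp only [mem_nb, mem_univ, true_and, repG]
      constructor
      · rintro ⟨h1, h2⟩; tauto
      · intro h; exact ⟨fun h' => hv (h' ▸ h), by tauto⟩
    rw [this, hτ]
    apply Finset.sum_congr rfl
    intro u hu
    exact hyne u (fun h => hv (h ▸ hu))
  have e2 : ∑ a ∈ univ.erase v, y a * ∑ b ∈ nb (repG G v T) (univ.erase v) a, y b =
      ∑ a ∈ univ.erase v, x a * ∑ b ∈ nb G (univ.erase v) a, x b := by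
    apply Finset.sum_congr rfl
    intro a ha
    have ha' : a ≠ v := (mem_erase.1 ha).1
    rw [hyne a ha']
    congr 1
    have : nb (repG G v T) (univ.erase v) a = nb G (univ.erase v) a := by
      ext u
      simp only [mem_nb, mem_erase, mem_univ, and_true, repG]
      constructor
      · rintro ⟨h1, h2, h3⟩; tauto
      · rintro ⟨h1, h2⟩; exact ⟨h1, h2.ne, Or.inl ⟨ha', h1, h2⟩⟩
    rw [this]
    apply Finset.sum_congr rfl
    intro u hu
    exact hyne u (mem_erase.1 (mem_nb.1 hu).1).1
  have e3 : ∑ u, y u ^ 2 = s ^ 2 + ∑ u ∈ univ.erase v, x u ^ 2 := by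
    rw [← Finset.add_sum_erase univ _ (mem_univ v), hyv]
    congr 1
    apply Finset.sum_congr rfl
    intro u hu
    rw [hyne u (mem_erase.1 hu).1]
  have e4 : QF G x = lam * (x v ^ 2 + ∑ u ∈ univ.erase v, x u ^ 2) := by
    rw [Finset.add_sum_erase univ (fun u => x u ^ 2) (mem_univ v), Finset.mul_sum]
    unfold QF
    apply Finset.sum_congr rfl
    intro u _
    rw [← hx u]; ring
  rw [QF_split _ x v, ← hx v] at e4
  rw [e1, e2, e3] at h1
  set A := ∑ u ∈ univ.erase v, x u ^ 2
  have hA : 0 ≤ s ^ 2 + A := add_nonneg (sq_nonneg _) (Finset.sum_nonneg (fun u _ => sq_nonneg _))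
  have h2 := mul_le_mul_of_nonneg_right hle hA
  have hsl : s * lam = τ := by rw [hs]; field_simp
  have h3 : 2 * (s * τ) ≤ lam * (s ^ 2 + x v ^ 2) := by nlinarith
  have h4 : (s * lam) ^ 2 ≤ (lam * x v) ^ 2 := by
    rw [← hsl] at h3
    have h5 : lam * s ^ 2 ≤ lam * x v ^ 2 := by nlinarith
    nlinarith [mul_le_mul_of_nonneg_left h5 hlam.le]
  rw [hsl] at h4
  exact abs_le_of_sq_le_sq' h4 (mul_nonneg hlam.le (hx0 v)) |>.2

end ABStruct


section ABStruct2
open scoped Classical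
open Finset

lemma sdiff_nb_card {n : ℕ} (G : SimpleGraph (Fin n)) (S : Finset (Fin n)) (v : Fin n) :
    ((S \ nb G S v).card : ℝ) = S.card - (nb G S v).card := by
  have h : nb G S v ⊆ S := Finset.filter_subset _ _
  rw [Finset.card_sdiff_of_subset h, Nat.cast_sub (Finset.card_le_card h)]

lemma half {n : ℕ} (k : ℕ) (hk : 2 ≤ k) (G : SimpleGraph (Fin n)) (hG : IsSpexWheel (2 * k + 1) G)
    (x : Fin n → ℝ) (hx0 : ∀ v, 0 ≤ x v) (hx1 : ∀ v, x v ≤ 1) (hlam : 0 < lam1 G)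
    (hx : ∀ v, lam1 G * x v = ∑ u ∈ nb G univ v, x u) (σ : ℝ) (hσ : 0 < σ)
    (hσk : (2 * k + 3) * σ ≤ 1 / 4) (hn : (2 * k + 3 : ℝ) ≤ σ * n)
    (hkst : ∀ v, ∑ a ∈ nb G univ v, ((nb G (nb G univ v) a).card : ℝ) ≤ σ ^ 2 * (n : ℝ) ^ 2)
    (S : Finset (Fin n)) (hmc : ∀ S', cutCount G S' ≤ cutCount G S)
    (hcut : (n : ℝ) ^ 2 / 4 - σ ^ 2 * n ^ 2 ≤ cutCount G S) :
    ((n : ℝ) / 2 - σ * n ≤ S.card ∧ (S.card : ℝ) ≤ n / 2 + σ * n) ∧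
    (∀ v ∈ S, ((nb G S v).card : ℝ) ≤ 2 * σ * n) ∧
    ∃ T ⊆ Sᶜ, ((Sᶜ \ T).card : ℝ) ≤ σ * n ∧ ∀ v, ∑ u ∈ T, x u - 1 ≤ lam1 G * x v := by
  have hnpos : (0 : ℝ) < n := by
    by_contra h
    have h0 : (n : ℝ) = 0 := le_antisymm (not_lt.1 h) (Nat.cast_nonneg _)
    rw [h0] at hn
    have : (0 : ℝ) ≤ k := Nat.cast_nonneg _
    linarith
  have hk0 : (0 : ℝ) ≤ k := Nat.cast_nonneg _
  have hSc : (Sᶜ.card : ℝ) = n - S.card := by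
    rw [Finset.card_compl, Nat.cast_sub (Finset.card_le_univ _)]; simp
  -- missing pairs
  have hmiss : ∀ P : Finset (Fin n), cutCount G P = cutCount G S → (P.card : ℝ) * Pᶜ.card = S.card * Sᶜ.card →
      ∑ v ∈ P, ((Pᶜ \ nb G Pᶜ v).card : ℝ) ≤ σ ^ 2 * n ^ 2 := by
    intro P hP hPS
    have h1 : ∑ v ∈ P, ((Pᶜ \ nb G Pᶜ v).card : ℝ) = P.card * Pᶜ.card - cutCount G P := by
      simp only [sdiff_nb_card]
      rw [Finset.sum_sub_distrib, cut_eq]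
      push_cast
      simp
    rw [h1, hP, hPS, hSc]
    nlinarith [sq_nonneg ((S.card : ℝ) - n / 2)]
  have hmS := hmiss S rfl rfl
  have hmSc : ∑ v ∈ Sᶜ, ((S \ nb G S v).card : ℝ) ≤ σ ^ 2 * n ^ 2 := by
    have := hmiss Sᶜ (cut_compl G S) (by rw [compl_compl]; ring)
    rwa [compl_compl] at this
  have hcard : ((S.card : ℝ) - n / 2) ^ 2 ≤ (σ * n) ^ 2 := by
    have h1 : (0 : ℝ) ≤ ∑ v ∈ S, ((Sᶜ \ nb G Sᶜ v).card : ℝ) := Finset.sum_nonneg (fun _ _ => Nat.cast_nonneg _)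
    have h2 : ∑ v ∈ S, ((Sᶜ \ nb G Sᶜ v).card : ℝ) = S.card * Sᶜ.card - cutCount G S := by
      simp only [sdiff_nb_card]
      rw [Finset.sum_sub_distrib, cut_eq]
      push_cast
      simp
    rw [h2, hSc] at h1
    nlinarith
  have hσn : 0 ≤ σ * n := by positivity
  have habs := abs_le_of_sq_le_sq' hcard hσn
  have hSlo : (n : ℝ) / 2 - σ * n ≤ S.card := by linarith
  refine ⟨⟨hSlo, by linarith⟩, ?_, ?_⟩
  · intro v hv
    by_contra hcon
    push Not at hcon
    have hmv := (Nat.cast_le (α := ℝ)).2 (move_ineq G S hmc v hv)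
    set A := nb G S v with hA
    set B := nb G Sᶜ v with hB
    have hAB : A ⊆ nb G univ v := fun a ha => mem_nb.2 ⟨mem_univ _, (mem_nb.1 ha).2⟩
    have hBB : B ⊆ nb G univ v := fun a ha => mem_nb.2 ⟨mem_univ _, (mem_nb.1 ha).2⟩
    have h1 : ∑ a ∈ A, ((nb G B a).card : ℝ) ≤ σ ^ 2 * n ^ 2 := by
      refine le_trans ?_ (hkst v)
      refine (Finset.sum_le_sum (g := fun a => ((nb G (nb G univ v) a).card : ℝ)) ?_).trans
        (Finset.sum_le_sum_of_subset_of_nonneg hAB (fun _ _ _ => Nat.cast_nonneg _))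
      intro a _
      exact Nat.cast_le.2 (Finset.card_le_card (Finset.filter_subset_filter _ hBB))
    have h2 : ∑ a ∈ A, ((B \ nb G B a).card : ℝ) ≤ σ ^ 2 * n ^ 2 := by
      refine le_trans ?_ hmS
      refine (Finset.sum_le_sum (g := fun a => ((Sᶜ \ nb G Sᶜ a).card : ℝ)) ?_).trans
        (Finset.sum_le_sum_of_subset_of_nonneg (Finset.filter_subset _ _) (fun _ _ _ => Nat.cast_nonneg _))
      intro a _
      apply Nat.cast_le.2 (Finset.card_le_card _)
      intro w hw
      simp only [mem_sdiff, mem_nb, hB] at hw ⊢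
      tauto
    have h3 : ∑ a ∈ A, ((B \ nb G B a).card : ℝ) = A.card * B.card - ∑ a ∈ A, ((nb G B a).card : ℝ) := by
      simp only [sdiff_nb_card]
      rw [Finset.sum_sub_distrib]
      simp
    rw [h3] at h2
    have h4 : (2 * σ * n) * (2 * σ * n) ≤ (A.card : ℝ) * B.card := by
      apply mul_le_mul hcon.le (hcon.le.trans hmv) (by positivity) (by positivity)
    have h5 : 0 < σ ^ 2 * (n : ℝ) ^ 2 := by positivity
    nlinarith
  · refine ⟨Sᶜ.filter (fun u => ((S \ nb G S u).card : ℝ) ≤ σ * n), Finset.filter_subset _ _, ?_, ?_⟩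
    · set B := Sᶜ \ Sᶜ.filter (fun u => ((S \ nb G S u).card : ℝ) ≤ σ * n) with hB
      have hBm : ∀ u ∈ B, u ∈ Sᶜ ∧ σ * n ≤ ((S \ nb G S u).card : ℝ) := by
        intro u hu
        rw [hB, mem_sdiff, mem_filter] at hu
        refine ⟨hu.1, ?_⟩
        by_contra hc
        exact hu.2 ⟨hu.1, (not_le.1 hc).le⟩
      have h1 : (B.card : ℝ) * (σ * n) ≤ σ ^ 2 * n ^ 2 := by
        calc (B.card : ℝ) * (σ * n) = ∑ u ∈ B, σ * n := by simp
          _ ≤ ∑ u ∈ B, ((S \ nb G S u).card : ℝ) := Finset.sum_le_sum (fun u hu => (hBm u hu).2)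
          _ ≤ _ := Finset.sum_le_sum_of_subset_of_nonneg (fun u hu => (hBm u hu).1) (fun _ _ _ => Nat.cast_nonneg _)
          _ ≤ _ := hmSc
      have h2 : (B.card : ℝ) * (σ * n) ≤ (σ * n) * (σ * n) := by nlinarith
      exact le_of_mul_le_mul_right h2 (by positivity)
    · intro v
      set T := Sᶜ.filter (fun u => ((S \ nb G S u).card : ℝ) ≤ σ * n) with hT
      have h1 : ∑ u ∈ T, x u - 1 ≤ ∑ u ∈ T.erase v, x u := by
        by_cases hv : v ∈ T
        · rw [← Finset.add_sum_erase T _ hv]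
          have := hx1 v
          linarith
        · rw [Finset.erase_eq_of_notMem hv]; linarith
      refine h1.trans ?_
      refine rep_ineq (2 * k + 1) G hG x hx0 hlam hx v (T.erase v) (by simp) ?_
      intro W hW
      -- common neighbour in S
      by_contra hcon
      push Not at hcon
      have hsub : S ⊆ W ∪ (W ∩ T).biUnion (fun u => S \ nb G S u) := by
        intro w hw
        rw [mem_union]
        by_cases hwW : w ∈ W
        · exact Or.inl hwW
        · right
          obtain ⟨s, hs1, hs2, hs3⟩ := hcon w hwW
          rw [mem_biUnion]
          refine ⟨s, mem_inter.2 ⟨hs1, (mem_erase.1 hs2).2⟩, ?_⟩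
          rw [mem_sdiff, mem_nb]
          exact ⟨hw, fun h => hs3 h.2.symm⟩
      have h2 : (S.card : ℝ) ≤ W.card + ∑ u ∈ W ∩ T, ((S \ nb G S u).card : ℝ) := by
        have := (Finset.card_le_card hsub).trans ((Finset.card_union_le _ _).trans
          (Nat.add_le_add_left Finset.card_biUnion_le _))
        exact_mod_cast this
      have h3 : ∑ u ∈ W ∩ T, ((S \ nb G S u).card : ℝ) ≤ (2 * k + 1) * (σ * n) := by
        calc _ ≤ ∑ u ∈ W ∩ T, σ * n := Finset.sum_le_sum (fun u hu => (mem_filter.1 (mem_inter.1 hu).2).2)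
          _ = ((W ∩ T).card : ℝ) * (σ * n) := by simp
          _ ≤ _ := by
            gcongr
            have : (W ∩ T).card ≤ 2 * k + 1 := (Finset.card_le_card Finset.inter_subset_left).trans hW
            exact_mod_cast this
      have h4 : (W.card : ℝ) ≤ 2 * k + 1 := by exact_mod_cast hW
      have h5 : (2 * k + 3) * σ * n ≤ 1 / 4 * n := by gcongr
      nlinarith

lemma struct_core {n : ℕ} (k : ℕ) (hk : 2 ≤ k) (G : SimpleGraph (Fin n)) (hG : IsSpexWheel (2 * k + 1) G)
    (σ : ℝ) (hσ : 0 < σ)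
    (hσk : (2 * k + 3) * σ ≤ 1 / 4) (hn : (2 * k + 3 : ℝ) ≤ σ * n)
    (hkst : ∀ v, ∑ a ∈ nb G univ v, ((nb G (nb G univ v) a).card : ℝ) ≤ σ ^ 2 * (n : ℝ) ^ 2)
    (hlam : (n : ℝ) / 2 ≤ lam1 G)
    (L : Finset (Fin n)) (hmc : ∀ S', cutCount G S' ≤ cutCount G L) :
    ∃ x : Fin n → ℝ, (∀ v, 1 - 8 * σ ≤ x v) ∧ (∀ v, x v ≤ 1) ∧
      (∀ v, lam1 G * x v = ∑ u ∈ nb G univ v, x u) ∧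
      lam1 G ≤ (1 / 2 + 8 * σ) * n ∧
      ((n : ℝ) / 2 - 8 * σ * n ≤ L.card ∧ (L.card : ℝ) ≤ n / 2 + 8 * σ * n) ∧
      (∀ v ∈ L, ((Lᶜ \ nb G Lᶜ v).card : ℝ) ≤ 8 * σ * n) ∧
      (∀ v ∈ Lᶜ, ((L \ nb G L v).card : ℝ) ≤ 8 * σ * n) := by
  have hk0 : (0 : ℝ) ≤ k := Nat.cast_nonneg _
  have hnpos : (0 : ℝ) < n := by
    by_contra h
    have h0 : (n : ℝ) = 0 := le_antisymm (not_lt.1 h) (Nat.cast_nonneg _)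
    rw [h0] at hn
    linarith
  have hn0 : 0 < n := by exact_mod_cast hnpos
  obtain ⟨⟨x, hx0, ⟨z, hz⟩, hx1, hx⟩, -⟩ := spec_exists hn0 G
  set lam := lam1 G with hlamdef
  have hlp : 0 < lam := by linarith
  have hcut : (n : ℝ) ^ 2 / 4 - σ ^ 2 * n ^ 2 ≤ cutCount G L := by
    set X := nb G univ z with hX
    have h1 : lam ^ 2 ≤ ∑ u ∈ X, ((nb G univ u).card : ℝ) := by
      have e1 : lam = ∑ u ∈ X, x u := by have := hx z; rw [hz, mul_one] at this; exact this
      calc lam ^ 2 = lam * ∑ u ∈ X, x u := by rw [← e1]; ring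
        _ = ∑ u ∈ X, ∑ w ∈ nb G univ u, x w := by
            rw [Finset.mul_sum]; exact Finset.sum_congr rfl (fun u _ => hx u)
        _ ≤ ∑ u ∈ X, ∑ w ∈ nb G univ u, (1 : ℝ) :=
            Finset.sum_le_sum (fun u _ => Finset.sum_le_sum (fun w _ => hx1 w))
        _ = _ := by simp
    have h2 : ∑ u ∈ X, ((nb G univ u).card : ℝ) = ∑ u ∈ X, ((nb G X u).card : ℝ) + cutCount G X := by
      rw [cut_eq]
      push_cast
      rw [← Finset.sum_add_distrib]
      apply Finset.sum_congr rfl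
      intro u _
      rw [← Nat.cast_add, ← Finset.card_union_of_disjoint]
      · congr 2
        ext w; simp only [mem_nb, mem_union, mem_univ, mem_compl]; tauto
      · rw [Finset.disjoint_left]
        intro w h3 h4
        exact (mem_compl.1 (mem_nb.1 h4).1) (mem_nb.1 h3).1
    have h3 := hkst z
    have h4 := (Nat.cast_le (α := ℝ)).2 (hmc X)
    nlinarith
  have hmc' : ∀ S', cutCount G S' ≤ cutCount G Lᶜ := fun S' => by rw [cut_compl]; exact hmc S'
  have HL := half k hk G hG x hx0 hx1 hlp hx σ hσ hσk hn hkst L hmc hcut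
  have HR := half k hk G hG x hx0 hx1 hlp hx σ hσ hσk hn hkst Lᶜ hmc' (by rw [cut_compl]; exact hcut)
  have hdsum : ∀ (S : Finset (Fin n)) (v : Fin n), lam * x v ≤ (nb G S v).card + ∑ u ∈ nb G Sᶜ v, x u := by
    intro S v
    rw [hx v]
    have : nb G univ v = nb G S v ∪ nb G Sᶜ v := by
      ext w; simp only [mem_nb, mem_union, mem_univ, mem_compl]; tauto
    rw [this, Finset.sum_union]
    · gcongr
      calc ∑ u ∈ nb G S v, x u ≤ ∑ u ∈ nb G S v, (1 : ℝ) := Finset.sum_le_sum (fun u _ => hx1 u)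
        _ = _ := by simp
    · rw [Finset.disjoint_left]
      intro w h3 h4
      exact (mem_compl.1 (mem_nb.1 h4).1) (mem_nb.1 h3).1
  have hle1 : ∀ (S : Finset (Fin n)), ∑ u ∈ S, x u ≤ S.card := fun S => by
    calc ∑ u ∈ S, x u ≤ ∑ u ∈ S, (1 : ℝ) := Finset.sum_le_sum (fun u _ => hx1 u)
      _ = _ := by simp
  -- key step
  have key : ∀ S : Finset (Fin n), z ∈ S → (∀ v ∈ S, ((nb G S v).card : ℝ) ≤ 2 * σ * n) →
      (Sᶜ.card : ℝ) ≤ n / 2 + σ * n →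
      (∃ T ⊆ Sᶜ, ((Sᶜ \ T).card : ℝ) ≤ σ * n ∧ ∀ v, ∑ u ∈ T, x u - 1 ≤ lam * x v) →
      lam ≤ n / 2 + 3 * σ * n ∧ ∀ v, lam - 4 * σ * n ≤ lam * x v := by
    rintro S hzS hd hSc ⟨T, hTS, hT1, hT2⟩
    have h1 := hdsum S z
    rw [hz, mul_one] at h1
    have h2 := hd z hzS
    have h3 : ∑ u ∈ nb G Sᶜ z, x u ≤ ∑ u ∈ Sᶜ, x u :=
      Finset.sum_le_sum_of_subset_of_nonneg (Finset.filter_subset _ _) (fun u _ _ => hx0 u)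
    have h4 := hle1 Sᶜ
    refine ⟨by linarith, fun v => ?_⟩
    have h5 := hT2 v
    have h6 : ∑ u ∈ Sᶜ, x u = ∑ u ∈ Sᶜ \ T, x u + ∑ u ∈ T, x u := (Finset.sum_sdiff hTS).symm
    have h7 := hle1 (Sᶜ \ T)
    nlinarith
  have key2 : lam ≤ n / 2 + 3 * σ * n ∧ ∀ v, lam - 4 * σ * n ≤ lam * x v := by
    by_cases hzL : z ∈ L
    · exact key L hzL HL.2.1 HR.1.2 HL.2.2
    · exact key Lᶜ (mem_compl.2 hzL) HR.2.1 (by rw [compl_compl]; exact HL.1.2) HR.2.2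
  obtain ⟨hlup, hxlow⟩ := key2
  have hσn : 0 < σ * n := by positivity
  have fin : ∀ S : Finset (Fin n), (∀ v ∈ S, ((nb G S v).card : ℝ) ≤ 2 * σ * n) →
      (Sᶜ.card : ℝ) ≤ n / 2 + σ * n → ∀ v ∈ S, ((Sᶜ \ nb G Sᶜ v).card : ℝ) ≤ 8 * σ * n := by
    intro S hd hSc v hv
    rw [sdiff_nb_card]
    have h1 := hdsum S v
    have h2 := hle1 (nb G Sᶜ v)
    have h3 := hd v hv
    have h4 := hxlow v
    linarith
  refine ⟨x, ?_, hx1, hx, by nlinarith, ⟨by nlinarith [HL.1.1], by nlinarith [HL.1.2]⟩, fin L HL.2.1 HR.1.2, ?_⟩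
  · intro v
    have h1 := hxlow v
    have h2 : lam * (1 - 8 * σ) ≤ lam * x v := by nlinarith
    exact le_of_mul_le_mul_left h2 hlp
  · have := fin Lᶜ HR.2.1 (by rw [compl_compl]; exact HL.1.2)
    rwa [compl_compl] at this

lemma structure_thm (k : ℕ) (hk : 3 ≤ k) (ε : ℝ) (hε : 0 < ε) : ∃ N : ℕ, ∀ n, N ≤ n →
    ∀ G : SimpleGraph (Fin n), IsSpexWheel (2 * k + 1) G → ∀ L : Finset (Fin n),
    (∀ S', cutCount G S' ≤ cutCount G L) →
    (∃ l r : ℕ, l + r = n ∧ l ≤ r + 2 ∧ r ≤ l + 2 ∧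
      (l : ℝ) * r + 1 ≤ lam1 G * (lam1 G - (k - 1))) ∧
    (n : ℝ) / 2 ≤ lam1 G ∧
    ∃ x : Fin n → ℝ, (∀ v, 1 - ε ≤ x v) ∧ (∀ v, x v ≤ 1) ∧
      (∀ v, lam1 G * x v = ∑ u ∈ nb G univ v, x u) ∧
      lam1 G ≤ (1 / 2 + ε) * n ∧
      ((n : ℝ) / 2 - ε * n ≤ L.card ∧ (L.card : ℝ) ≤ n / 2 + ε * n) ∧
      (∀ v ∈ L, ((Lᶜ \ nb G Lᶜ v).card : ℝ) ≤ ε * n) ∧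
      (∀ v ∈ Lᶜ, ((L \ nb G L v).card : ℝ) ≤ ε * n) := by
  have hk0 : (0 : ℝ) < k := by have : 0 < k := by omega
                               exact_mod_cast this
  have hk3 : (3 : ℝ) ≤ k := by exact_mod_cast hk
  obtain ⟨σ, hσ, hσ1, hσ2⟩ : ∃ σ : ℝ, 0 < σ ∧ 8 * σ ≤ ε ∧ (2 * k + 3) * σ ≤ 1 / 4 := by
    refine ⟨min (ε / 8) (1 / (4 * (2 * k + 3))), by positivity, ?_, ?_⟩
    · linarith [min_le_left (ε / 8) (1 / (4 * (2 * (k : ℝ) + 3)))]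
    · have h1 := min_le_right (ε / 8) (1 / (4 * (2 * (k : ℝ) + 3)))
      have h2 : (2 * (k : ℝ) + 3) * (1 / (4 * (2 * k + 3))) = 1 / 4 := by field_simp
      rw [← h2]
      gcongr
  obtain ⟨N1, hN1⟩ := kst k (by omega) (σ ^ 2) (by positivity)
  obtain ⟨N2, hN2⟩ := lower_exists k hk
  obtain ⟨N3, hN3⟩ := exists_nat_gt ((2 * k + 3) / σ)
  refine ⟨N1 + N2 + N3, fun n hn G hG L hmc => ?_⟩
  obtain ⟨H, hH, l, r, hlr, h1, h2, hHpos, h3⟩ := hN2 n (by omega)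
  have hle := hG.2 H hH
  have hHk : (k : ℝ) - 1 < lam1 H := by
    by_contra hc
    push Not at hc
    have : lam1 H * (lam1 H - (k - 1)) ≤ 0 := mul_nonpos_of_nonneg_of_nonpos hHpos.le (by linarith)
    have : (0 : ℝ) ≤ (l : ℝ) * r := by positivity
    linarith
  have h4 : (l : ℝ) * r + 1 ≤ lam1 G * (lam1 G - (k - 1)) := by
    refine h3.trans ?_
    apply mul_le_mul hle (by linarith) (by linarith) (by linarith)
  have hlrn : (l : ℝ) + r = n := by exact_mod_cast hlr
  have hn4 : (n : ℝ) ^ 2 / 4 ≤ (l : ℝ) * r + 1 := by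
    have a1 : (l : ℝ) ≤ r + 2 := by exact_mod_cast h1
    have a2 : (r : ℝ) ≤ l + 2 := by exact_mod_cast h2
    rw [← hlrn]
    nlinarith
  have hlam : (n : ℝ) / 2 ≤ lam1 G := by
    by_contra hc
    push Not at hc
    have hp : 0 < lam1 G := by linarith
    have : lam1 G * (lam1 G - (k - 1)) ≤ lam1 G * lam1 G := by
      apply mul_le_mul_of_nonneg_left _ hp.le
      linarith
    nlinarith
  have hNn : (2 * k + 3 : ℝ) ≤ σ * n := by
    rw [div_lt_iff₀ hσ] at hN3
    have : (N3 : ℝ) ≤ n := by exact_mod_cast (by omega : N3 ≤ n)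
    nlinarith
  refine ⟨⟨l, r, hlr, h1, h2, h4⟩, hlam, ?_⟩
  obtain ⟨x, b1, b2, b3, b4, b5, b6, b7⟩ := struct_core k (by omega) G hG σ hσ hσ2 hNn
    (hN1 n (by omega) G hG.1) hlam L hmc
  have hn0 : (0 : ℝ) ≤ n := Nat.cast_nonneg _
  have hen : 8 * σ * n ≤ ε * n := by gcongr
  exact ⟨x, fun v => by linarith [b1 v], b2, b3, by nlinarith, ⟨by linarith [b5.1], by linarith [b5.2]⟩,
    fun v hv => (b6 v hv).trans hen, fun v hv => (b7 v hv).trans hen⟩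

end ABStruct2


section ABExtract
open scoped Classical
open Finset

/-- vertices of `R` with at least `j` neighbours in `R` -/
noncomputable def Dj {n : ℕ} (G : SimpleGraph (Fin n)) (R : Finset (Fin n)) (j : ℕ) : Finset (Fin n) :=
  R.filter (fun w => j ≤ (nb G R w).card)

lemma extract {n : ℕ} (G : SimpleGraph (Fin n)) (R : Finset (Fin n)) (D : ℕ)
    (hD : ∀ w ∈ R, (nb G R w).card ≤ D) (j : ℕ) (hj : j ≤ 2) (Bad : Finset (Fin n))
    (hbig : (D + 1) * Bad.card < (Dj G R j).card) :
    ∃ Q : List (Fin n), Q.length = j + 1 ∧ Q.IsChain G.Adj ∧ Q.Nodup ∧ ∀ q ∈ Q, q ∈ R ∧ q ∉ Bad := by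
  set Bad' := Bad ∪ (Bad ∩ R).biUnion (fun b => nb G R b) with hB
  have hc : Bad'.card ≤ (D + 1) * Bad.card := by
    have h1 : ((Bad ∩ R).biUnion (fun b => nb G R b)).card ≤ (Bad ∩ R).card * D :=
      Finset.card_biUnion_le_card_mul _ _ _ (fun b hb => hD b (mem_inter.1 hb).2)
    have h2 : (Bad ∩ R).card ≤ Bad.card := Finset.card_le_card Finset.inter_subset_left
    have h3 := Finset.card_union_le Bad ((Bad ∩ R).biUnion (fun b => nb G R b))
    have h4 : (Bad ∩ R).card * D ≤ Bad.card * D := Nat.mul_le_mul_right _ h2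
    calc Bad'.card ≤ Bad.card + Bad.card * D := by rw [hB]; omega
      _ = _ := by ring
  obtain ⟨w, hw, hwB⟩ := Finset.exists_mem_notMem_of_card_lt_card (lt_of_le_of_lt hc hbig)
  obtain ⟨hwR, hwj⟩ := mem_filter.1 hw
  have hwBad : w ∉ Bad := fun h => hwB (mem_union_left _ h)
  have hnb : ∀ a ∈ nb G R w, a ∈ R ∧ a ∉ Bad := by
    intro a ha
    obtain ⟨haR, hwa⟩ := mem_nb.1 ha
    refine ⟨haR, fun h => hwB (mem_union_right _ ?_)⟩
    exact mem_biUnion.2 ⟨a, mem_inter.2 ⟨h, haR⟩, mem_nb.2 ⟨hwR, hwa.symm⟩⟩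
  obtain rfl | rfl | rfl : j = 0 ∨ j = 1 ∨ j = 2 := by omega
  · exact ⟨[w], by simp, by simp, by simp, by simpa using ⟨hwR, hwBad⟩⟩
  · obtain ⟨a, ha⟩ := Finset.card_pos.1 (show 0 < (nb G R w).card by omega)
    have h1 := hnb a ha
    have h2 := (mem_nb.1 ha).2
    refine ⟨[a, w], by simp, by simpa using h2.symm, by simpa using h2.ne', ?_⟩
    intro q hq
    simp only [List.mem_cons, List.not_mem_nil, or_false] at hq
    rcases hq with rfl | rfl
    · exact h1
    · exact ⟨hwR, hwBad⟩
  · obtain ⟨a, ha, b, hb, hab⟩ := Finset.one_lt_card.1 (show 1 < (nb G R w).card by omega)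
    have h1 := hnb a ha
    have h2 := (mem_nb.1 ha).2
    have h3 := hnb b hb
    have h4 := (mem_nb.1 hb).2
    refine ⟨[a, w, b], by simp, by simpa using ⟨h2.symm, h4⟩, by simpa using ⟨⟨h2.ne', hab⟩, h4.ne⟩, ?_⟩
    intro q hq
    simp only [List.mem_cons, List.not_mem_nil, or_false] at hq
    rcases hq with rfl | rfl | rfl
    · exact h1
    · exact ⟨hwR, hwBad⟩
    · exact h3

lemma extract_many {n : ℕ} (G : SimpleGraph (Fin n)) (R : Finset (Fin n)) (D : ℕ)
    (hD : ∀ w ∈ R, (nb G R w).card ≤ D) : ∀ (js : List ℕ) (Bad : Finset (Fin n)),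
    (∀ j ∈ js, j ≤ 2 ∧ (D + 1) * (Bad.card + (js.map (· + 1)).sum) < (Dj G R j).card) →
    ∃ Qs : List (List (Fin n)), Qs.length = js.length ∧ Qs.flatten.length = (js.map (· + 1)).sum ∧
      (∀ Q ∈ Qs, Q ≠ []) ∧ (∀ Q ∈ Qs, Q.IsChain G.Adj) ∧ Qs.flatten.Nodup ∧
      ∀ q ∈ Qs.flatten, q ∈ R ∧ q ∉ Bad
  | [], Bad, _ => ⟨[], by simp⟩
  | j :: js, Bad, h => by
    have hj := h j (by simp)
    simp only [List.map_cons, List.sum_cons] at hj h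
    obtain ⟨Q, hQ1, hQ2, hQ3, hQ4⟩ := extract G R D hD j hj.1 Bad
      (lt_of_le_of_lt (Nat.mul_le_mul_left _ (Nat.le_add_right _ _)) hj.2)
    have hcard : (Bad ∪ Q.toFinset).card ≤ Bad.card + (j + 1) := by
      refine (Finset.card_union_le _ _).trans ?_
      have := Q.toFinset_card_le
      omega
    obtain ⟨Qs, a1, a2, a3, a4, a5, a6⟩ := extract_many G R D hD js (Bad ∪ Q.toFinset) (by
      intro i hi
      have hi' := h i (by simp [hi])
      refine ⟨hi'.1, lt_of_le_of_lt (Nat.mul_le_mul_left _ ?_) hi'.2⟩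
      omega)
    refine ⟨Q :: Qs, by simp [a1], by simp [a2, hQ1], ?_, ?_, ?_, ?_⟩
    · intro P hP
      rcases List.mem_cons.1 hP with rfl | hP
      · intro h0; rw [h0] at hQ1; simp at hQ1
      · exact a3 P hP
    · intro P hP
      rcases List.mem_cons.1 hP with rfl | hP
      · exact hQ2
      · exact a4 P hP
    · rw [List.flatten_cons, List.nodup_append]
      refine ⟨hQ3, a5, ?_⟩
      intro a ha b hb hab
      exact (a6 b hb).2 (mem_union_right _ (by simpa [← hab] using ha))
    · intro q hq
      rw [List.flatten_cons, List.mem_append] at hq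
      rcases hq with hq | hq
      · exact hQ4 q hq
      · exact ⟨(a6 q hq).1, fun hb => (a6 q hq).2 (mem_union_left _ hb)⟩

lemma shape_wheel {n : ℕ} (G : SimpleGraph (Fin n)) (L R : Finset (Fin n)) (hLR : Disjoint L R)
    (k : ℕ) (hk : 2 ≤ k) (M D : ℕ) (hM : ∀ v ∈ L, (R \ nb G R v).card ≤ M)
    (hD : ∀ w ∈ R, (nb G R w).card ≤ D) (v : Fin n) (hv : v ∈ L) (us : Finset (Fin n))
    (hus : us ⊆ nb G L v) (husk : us.card ≤ k) (Q0 : List (List (Fin n)))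
    (hQ1 : ∀ Q ∈ Q0, Q ≠ []) (hQ2 : ∀ Q ∈ Q0, Q.IsChain G.Adj) (hQ3 : Q0.flatten.Nodup)
    (hQ4 : ∀ q ∈ Q0.flatten, q ∈ R ∧ G.Adj v q ∧ ∀ u ∈ us, G.Adj u q)
    (js : List ℕ) (hlen : us.card = Q0.length + js.length)
    (htot : us.card + (Q0.flatten.length + (js.map (· + 1)).sum) = 2 * k)
    (hj : ∀ j ∈ js, j ≤ 2 ∧ (D + 1) * ((k + 1) * M + 2 * k) < (Dj G R j).card) :
    ContainsCopy (wheelGraph (2 * k + 1)) G := by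
  set Bad0 := (insert v us).biUnion (fun u => R \ nb G R u) with hB0
  set Bad := Bad0 ∪ Q0.flatten.toFinset with hB
  have husL : ∀ u ∈ us, u ∈ L := fun u hu => (mem_nb.1 (hus hu)).1
  have hc0 : Bad0.card ≤ (k + 1) * M := by
    refine (Finset.card_biUnion_le_card_mul _ _ M ?_).trans ?_
    · intro u hu
      rcases mem_insert.1 hu with rfl | hu
      · exact hM _ hv
      · exact hM _ (husL u hu)
    · apply Nat.mul_le_mul_right
      exact (Finset.card_insert_le _ _).trans (by omega)
  have hc : Bad.card ≤ (k + 1) * M + Q0.flatten.length := by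
    refine (Finset.card_union_le _ _).trans ?_
    have := Q0.flatten.toFinset_card_le
    omega
  obtain ⟨Qs, a1, a2, a3, a4, a5, a6⟩ := extract_many G R D hD js Bad (by
    intro j hjj
    obtain ⟨h1, h2⟩ := hj j hjj
    refine ⟨h1, lt_of_le_of_lt (Nat.mul_le_mul_left _ ?_) h2⟩
    omega)
  have hgood : ∀ q ∈ Qs.flatten, G.Adj v q ∧ ∀ u ∈ us, G.Adj u q := by
    intro q hq
    obtain ⟨h1, h2⟩ := a6 q hq
    have h3 : q ∉ Bad0 := fun h => h2 (mem_union_left _ h)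
    have h4 : ∀ u ∈ insert v us, G.Adj u q := by
      intro u hu
      by_contra hc
      apply h3
      rw [hB0, mem_biUnion]
      exact ⟨u, hu, mem_sdiff.2 ⟨h1, fun h => hc (mem_nb.1 h).2⟩⟩
    exact ⟨h4 v (mem_insert_self _ _), fun u hu => h4 u (mem_insert_of_mem hu)⟩
  have hall : ∀ q ∈ (Q0 ++ Qs).flatten, q ∈ R ∧ G.Adj v q ∧ ∀ u ∈ us, G.Adj u q := by
    intro q hq
    rw [List.flatten_append, List.mem_append] at hq
    rcases hq with hq | hq
    · exact hQ4 q hq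
    · exact ⟨(a6 q hq).1, hgood q hq⟩
  refine block_wheel G k hk v us.toList (Q0 ++ Qs) ?_ ?_ ?_ ?_ ?_ ?_ ?_ ?_
  · rw [Finset.length_toList, List.length_append, a1, hlen]
  · intro Q hQ
    rcases List.mem_append.1 hQ with h | h
    · exact hQ1 Q h
    · exact a3 Q h
  · intro Q hQ
    rcases List.mem_append.1 hQ with h | h
    · exact hQ2 Q h
    · exact a4 Q h
  · rw [List.nodup_append]
    refine ⟨us.nodup_toList, ?_, ?_⟩
    · rw [List.flatten_append, List.nodup_append]
      refine ⟨hQ3, a5, ?_⟩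
      intro a ha b hb hab
      apply (a6 b hb).2
      apply mem_union_right
      rw [List.mem_toFinset, ← hab]; exact ha
    · intro a ha b hb hab
      have h1 := husL a (by simpa using ha)
      have h2 := (hall b hb).1
      rw [← hab] at h2
      exact (Finset.disjoint_left.1 hLR h1) h2
  · intro u hu Q hQ q hq
    exact (hall q (List.mem_flatten.2 ⟨Q, hQ, hq⟩)).2.2 u (by simpa using hu)
  · intro u hu
    exact (mem_nb.1 (hus (by simpa using hu))).2
  · intro q hq
    exact (hall q hq).2.1
  · rw [Finset.length_toList, List.flatten_append, List.length_append, a2]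
    exact htot

lemma two_edges {n : ℕ} (G : SimpleGraph (Fin n)) (R : Finset (Fin n))
    (h : 2 < ∑ w ∈ R, (nb G R w).card) :
    ∃ Q0 : List (List (Fin n)), (∀ Q ∈ Q0, Q ≠ []) ∧ (∀ Q ∈ Q0, Q.IsChain G.Adj) ∧ Q0.flatten.Nodup ∧
      (∀ q ∈ Q0.flatten, q ∈ R) ∧ Q0.flatten.length = Q0.length + 2 ∧ Q0.length ≤ 2 := by
  by_cases h2 : ∃ w ∈ R, 2 ≤ (nb G R w).card
  · obtain ⟨w, hw, hw2⟩ := h2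
    obtain ⟨a, ha, b, hb, hab⟩ := Finset.one_lt_card.1 (show 1 < (nb G R w).card by omega)
    obtain ⟨h1, h2⟩ := mem_nb.1 ha
    obtain ⟨h3, h4⟩ := mem_nb.1 hb
    refine ⟨[[a, w, b]], by simp, by simpa using ⟨h2.symm, h4⟩, by simpa using ⟨⟨h2.ne', hab⟩, h4.ne⟩, ?_, by simp, by simp⟩
    intro q hq
    simp at hq
    rcases hq with rfl | rfl | rfl <;> assumption
  · push Not at h2
    have hsum : ∑ w ∈ R, (nb G R w).card ≤ (Dj G R 1).card := by
      unfold Dj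
      rw [Finset.card_filter]
      apply Finset.sum_le_sum
      intro w hw
      have := h2 w hw
      split_ifs <;> omega
    have hun : ∀ a b c, a ∈ R → b ∈ R → c ∈ R → G.Adj a b → G.Adj a c → b = c := by
      intro a b c ha hb hc hab hac
      have h1 : (nb G R a).card ≤ 1 := by have := h2 a ha; omega
      exact Finset.card_le_one.1 h1 b (mem_nb.2 ⟨hb, hab⟩) c (mem_nb.2 ⟨hc, hac⟩)
    have hD : ∀ w ∈ Dj G R 1, w ∈ R ∧ ∃ a ∈ R, G.Adj w a := by
      intro w hw
      obtain ⟨h1, h2⟩ := mem_filter.1 hw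
      obtain ⟨a, ha⟩ := Finset.card_pos.1 (show 0 < (nb G R w).card by omega)
      exact ⟨h1, a, (mem_nb.1 ha).1, (mem_nb.1 ha).2⟩
    obtain ⟨w, hw⟩ := Finset.card_pos.1 (show 0 < (Dj G R 1).card by omega)
    obtain ⟨hwR, a, haR, hwa⟩ := hD w hw
    have hlt : ({w, a} : Finset (Fin n)).card < (Dj G R 1).card := by
      have : ({w, a} : Finset (Fin n)).card ≤ 2 := Finset.card_le_two
      omega
    obtain ⟨b, hb, hbn⟩ := Finset.exists_mem_notMem_of_card_lt_card hlt
    obtain ⟨hbR, c, hcR, hbc⟩ := hD b hb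
    simp only [mem_insert, mem_singleton, not_or] at hbn
    have hcw : c ≠ w := by
      rintro rfl
      exact hbn.2 (hun c b a hwR hbR haR hbc.symm hwa)
    have hca : c ≠ a := by
      rintro rfl
      exact hbn.1 (hun c b w haR hbR hwR hbc.symm hwa.symm)
    refine ⟨[[w, a], [b, c]], by simp, by simpa using ⟨hwa, hbc⟩, ?_, ?_, by simp, by simp⟩
    · have := hwa.ne
      have := hbc.ne
      simp [hwa.ne, hbc.ne, Ne.symm hbn.1, Ne.symm hbn.2, hcw.symm, hca.symm]
    · intro q hq
      simp at hq
      rcases hq with rfl | rfl | rfl | rfl <;> assumption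

end ABExtract


section ABFinal
open scoped Classical
open Finset

/-- the structural data of an extremal graph -/
structure SD {n : ℕ} (k : ℕ) (G : SimpleGraph (Fin n)) (L R : Finset (Fin n)) (lam ε : ℝ)
    (x : Fin n → ℝ) : Prop where
  disj : Disjoint L R
  cov : L ∪ R = univ
  free : WheelFree (2 * k + 1) G
  xlo : ∀ v, 1 - ε ≤ x v
  xhi : ∀ v, x v ≤ 1
  eig : ∀ v, lam * x v = ∑ u ∈ nb G univ v, x u
  lamlo : (n : ℝ) / 2 ≤ lam
  lamhi : lam ≤ (1 / 2 + ε) * n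
  llo : (n : ℝ) / 2 - ε * n ≤ L.card
  lhi : (L.card : ℝ) ≤ n / 2 + ε * n
  rlo : (n : ℝ) / 2 - ε * n ≤ R.card
  rhi : (R.card : ℝ) ≤ n / 2 + ε * n
  ml : ∀ v ∈ L, ((R \ nb G R v).card : ℝ) ≤ ε * n
  mr : ∀ v ∈ R, ((L \ nb G L v).card : ℝ) ≤ ε * n
  low : lam * (k - 1) + (L.card : ℝ) * R.card ≤ lam ^ 2
  kk : 3 ≤ k
  eps : ε = 1 / (1000 * (k : ℝ) ^ 3)
  big : 100 * (k : ℝ) ^ 2 ≤ ε * n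

namespace SD

variable {n k : ℕ} {G : SimpleGraph (Fin n)} {L R : Finset (Fin n)} {lam ε : ℝ} {x : Fin n → ℝ}

lemma swap (h : SD k G L R lam ε x) : SD k G R L lam ε x where
  disj := h.disj.symm
  cov := by rw [Finset.union_comm]; exact h.cov
  free := h.free
  xlo := h.xlo
  xhi := h.xhi
  eig := h.eig
  lamlo := h.lamlo
  lamhi := h.lamhi
  llo := h.rlo
  lhi := h.rhi
  rlo := h.llo
  rhi := h.lhi
  ml := h.mr
  mr := h.ml
  low := by have := h.low; linarith
  kk := h.kk
  eps := h.eps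
  big := h.big

lemma k3 (h : SD k G L R lam ε x) : (3 : ℝ) ≤ k := by exact_mod_cast h.kk

lemma eps_pos (h : SD k G L R lam ε x) : 0 < ε := by
  have := h.k3
  rw [h.eps]; positivity

lemma eps_k3 (h : SD k G L R lam ε x) : ε * (k : ℝ) ^ 3 = 1 / 1000 := by
  have := h.k3
  rw [h.eps]; field_simp

lemma eps_k2 (h : SD k G L R lam ε x) : ε * (k : ℝ) ^ 2 ≤ 1 / 3000 := by
  have h1 := h.k3
  have h2 := h.eps_k3
  have h3 := h.eps_pos
  have : ε * (k : ℝ) ^ 2 * 3 ≤ ε * (k : ℝ) ^ 3 := by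
    rw [pow_succ (k : ℝ) 2, ← mul_assoc]; gcongr
  linarith

lemma eps_k1 (h : SD k G L R lam ε x) : ε * (k : ℝ) ≤ 1 / 9000 := by
  have h1 := h.k3
  have h2 := h.eps_k2
  have h3 := h.eps_pos
  have : ε * (k : ℝ) * 3 ≤ ε * (k : ℝ) ^ 2 := by
    rw [sq, ← mul_assoc]; gcongr
  linarith

lemma eps_k0 (h : SD k G L R lam ε x) : ε ≤ 1 / 27000 := by
  have h1 := h.k3
  have h2 := h.eps_k1
  have h3 := h.eps_pos
  nlinarith

lemma npos (h : SD k G L R lam ε x) : (0 : ℝ) < n := by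
  have h1 := h.big
  have h2 := h.k3
  have h3 := h.eps_pos
  by_contra hc
  have h4 : ε * n ≤ 0 := mul_nonpos_of_nonneg_of_nonpos h3.le (not_lt.1 hc)
  nlinarith

lemma lampos (h : SD k G L R lam ε x) : 0 < lam := by
  have := h.npos; have := h.lamlo; linarith

lemma xpos (h : SD k G L R lam ε x) (v : Fin n) : 0 < x v := by
  have := h.xlo v; have := h.eps_k0; linarith

lemma lpos (h : SD k G L R lam ε x) : (0 : ℝ) < L.card := by
  have := h.npos; have := h.llo; have := h.eps_k0; nlinarith

/-- missing degree bound -/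
noncomputable def mm (n : ℕ) (ε : ℝ) : ℕ := ⌊ε * n⌋₊

lemma ml' (h : SD k G L R lam ε x) (v : Fin n) (hv : v ∈ L) : (R \ nb G R v).card ≤ mm n ε :=
  Nat.le_floor (h.ml v hv)

lemma mm_le (h : SD k G L R lam ε x) : (mm n ε : ℝ) ≤ ε * n :=
  Nat.floor_le (mul_nonneg h.eps_pos.le h.npos.le)

/-- the threshold -/
noncomputable def thr (n k : ℕ) (ε : ℝ) : ℕ := k * ((k + 1) * mm n ε + 2 * k)

lemma thr_le (h : SD k G L R lam ε x) : (thr n k ε : ℝ) ≤ 2 * k ^ 2 * (ε * n) := by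
  have h1 := h.mm_le
  have h2 := h.k3
  have h3 := h.big
  unfold thr
  push_cast
  have e1 : (k : ℝ) * ((k + 1) * mm n ε + 2 * k) ≤ k * ((k + 1) * (ε * n) + 2 * k) := by gcongr
  refine e1.trans ?_
  have hp : 0 ≤ ε * n := mul_nonneg h.eps_pos.le h.npos.le
  have e2 : (k + 1) * (ε * n) + 2 * k ≤ 2 * k * (ε * n) := by nlinarith
  calc (k : ℝ) * ((k + 1) * (ε * n) + 2 * k) ≤ k * (2 * k * (ε * n)) := by gcongr
    _ = _ := by ring

lemma degL (h : SD k G L R lam ε x) : ∀ v ∈ L, (nb G L v).card ≤ k - 1 := by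
  intro v hv
  by_contra hc
  have hkk := h.kk
  obtain ⟨A, hA, hAc⟩ := Finset.exists_subset_card_eq (show k ≤ (nb G L v).card by omega)
  have hAL : ∀ u ∈ A, u ∈ L := fun u hu => (mem_nb.1 (hA hu)).1
  set Bad := (insert v A).biUnion (fun u => R \ nb G R u) with hB
  have hBc : Bad.card ≤ (k + 1) * mm n ε := by
    refine (Finset.card_biUnion_le_card_mul _ _ (mm n ε) ?_).trans ?_
    · intro u hu
      rcases mem_insert.1 hu with rfl | hu
      · exact h.ml' _ hv
      · exact h.ml' _ (hAL u hu)
    · apply Nat.mul_le_mul_right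
      exact (Finset.card_insert_le _ _).trans (by omega)
  have hbig : k ≤ (R \ Bad).card := by
    have h1 : R.card ≤ (R \ Bad).card + Bad.card := by
      have := Finset.le_card_sdiff Bad R
      omega
    have h2 : ((R.card : ℕ) : ℝ) ≤ (R \ Bad).card + (k + 1) * mm n ε := by
      exact_mod_cast h1.trans (Nat.add_le_add_left hBc _)
    have h3 := h.rlo
    have h4 := h.mm_le
    have h5 := h.eps_k1
    have h6 := h.eps_k0
    have h7 := h.k3
    have h8 := h.npos
    have h9 := h.big
    have h10 : (k + 1) * (mm n ε : ℝ) ≤ (k + 1) * (ε * n) := by gcongr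
    have h11 : ε * k * n ≤ 1 / 9000 * n := by gcongr
    have h12 : ε * n ≤ 1 / 27000 * n := by gcongr
    have h13 : (k : ℝ) ≤ (R \ Bad).card := by nlinarith
    exact_mod_cast h13
  obtain ⟨B, hBs, hBcard⟩ := Finset.exists_subset_card_eq hbig
  have hgood : ∀ q ∈ B, ∀ u ∈ insert v A, G.Adj u q := by
    intro q hq u hu
    by_contra hcc
    obtain ⟨h1, h2⟩ := mem_sdiff.1 (hBs hq)
    apply h2
    rw [hB, mem_biUnion]
    exact ⟨u, hu, mem_sdiff.2 ⟨h1, fun h => hcc (mem_nb.1 h).2⟩⟩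
  apply h.free
  exact bip_wheel G k (by omega) v A B hAc hBcard
    (fun a ha b hb => hgood b hb a (mem_insert_of_mem ha)) (fun a ha => (mem_nb.1 (hA ha)).2)
    (fun b hb => hgood b hb v (mem_insert_self _ _))

lemma shapes (h : SD k G L R lam ε x) (v : Fin n) (hv : v ∈ L) (js : List ℕ)
    (hlen : js.length ≤ (nb G L v).card) (hlk : js.length ≤ k) (htot : js.length + (js.map (· + 1)).sum = 2 * k)
    (hj : ∀ j ∈ js, j ≤ 2 ∧ thr n k ε < (Dj G R j).card) : False := by
  obtain ⟨us, hus, husc⟩ := Finset.exists_subset_card_eq hlen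
  have hkk := h.kk
  apply h.free
  refine shape_wheel G L R h.disj k (by omega) (mm n ε) (k - 1) (h.ml') (h.swap.degL) v hv us hus
    (by omega) [] (by simp) (by simp) (by simp) (by simp) js (by simpa using husc) (by simp [husc]; simpa using htot) ?_
  intro j hjj
  obtain ⟨h1, h2⟩ := hj j hjj
  refine ⟨h1, ?_⟩
  rwa [show k - 1 + 1 = k by omega]

lemma Dj_mono (G : SimpleGraph (Fin n)) (R : Finset (Fin n)) {i j : ℕ} (hij : i ≤ j) :
    (Dj G R j).card ≤ (Dj G R i).card := by
  apply Finset.card_le_card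
  intro w hw
  obtain ⟨h1, h2⟩ := mem_filter.1 hw
  exact mem_filter.2 ⟨h1, hij.trans h2⟩

lemma deg_third (h : SD k G L R lam ε x) (hD : thr n k ε < (Dj G R 1).card) :
    ∀ v ∈ L, 3 * (nb G L v).card ≤ 2 * k - 1 := by
  intro v hv
  by_contra hc
  have h1 := h.degL v hv
  have hkk := h.kk
  set d := (nb G L v).card with hd
  refine h.shapes v hv (List.replicate (2 * k - 2 * d) 1 ++ List.replicate (3 * d - 2 * k) 0) ?_ ?_ ?_ ?_
  · simp; omega
  · simp; omega
  · simp; omega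
  · intro j hj
    rw [List.mem_append, List.mem_replicate, List.mem_replicate] at hj
    rcases hj with ⟨-, rfl⟩ | ⟨-, rfl⟩
    · exact ⟨by omega, hD⟩
    · exact ⟨by omega, hD.trans_le (Dj_mono G R (by omega))⟩

lemma deg_half (h : SD k G L R lam ε x) (hD : thr n k ε < (Dj G R 2).card) :
    ∀ v ∈ L, 2 * (nb G L v).card ≤ k - 1 := by
  intro v hv
  by_contra hc
  have h1 := h.degL v hv
  have hkk := h.kk
  set d := (nb G L v).card with hd
  refine h.shapes v hv (List.replicate (k - d) 2 ++ List.replicate (2 * d - k) 0) ?_ ?_ ?_ ?_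
  · simp; omega
  · simp; omega
  · simp; omega
  · intro j hj
    rw [List.mem_append, List.mem_replicate, List.mem_replicate] at hj
    rcases hj with ⟨-, rfl⟩ | ⟨-, rfl⟩
    · exact ⟨by omega, hD⟩
    · exact ⟨by omega, hD.trans_le (Dj_mono G R (by omega))⟩

lemma eig' (h : SD k G L R lam ε x) (v : Fin n) :
    lam * x v = ∑ u ∈ nb G L v, x u + ∑ u ∈ nb G R v, x u := by
  rw [h.eig v, ← Finset.sum_union]
  · congr 1
    ext w
    have : w ∈ L ∪ R := by rw [h.cov]; exact mem_univ _
    simp only [mem_union] at this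
    simp only [mem_nb, mem_union, mem_univ]
    tauto
  · rw [Finset.disjoint_left]
    intro w h3 h4
    exact Finset.disjoint_left.1 h.disj (mem_nb.1 h3).1 (mem_nb.1 h4).1

lemma sum_le_max (h : SD k G L R lam ε x) (S : Finset (Fin n)) (c : ℝ) (hc : ∀ u ∈ S, x u ≤ c) :
    ∑ u ∈ S, x u ≤ S.card * c := by
  have := Finset.sum_le_card_nsmul S x c hc
  simpa using this

lemma sum_nb_le (h : SD k G L R lam ε x) (S : Finset (Fin n)) (v : Fin n) :
    ∑ u ∈ nb G S v, x u ≤ ∑ u ∈ S, x u :=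
  Finset.sum_le_sum_of_subset_of_nonneg (Finset.filter_subset _ _) (fun u _ _ => (h.xpos u).le)

lemma half_AV (h : SD k G L R lam ε x) :
    lam * ∑ v ∈ L, x v ≤ ∑ v ∈ L, ((nb G L v).card : ℝ) + L.card * ∑ u ∈ R, x u := by
  rw [Finset.mul_sum]
  calc ∑ v ∈ L, lam * x v ≤ ∑ v ∈ L, (((nb G L v).card : ℝ) + ∑ u ∈ R, x u) := by
        apply Finset.sum_le_sum
        intro v _
        rw [h.eig' v]
        have h1 := h.sum_le_max (nb G L v) 1 (fun u _ => h.xhi u)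
        have h2 := h.sum_nb_le R v
        linarith
    _ = _ := by rw [Finset.sum_add_distrib]; simp

lemma AV (h : SD k G L R lam ε x) :
    (k - 1) * (1 - ε) * (L.card * lam) ≤
      lam * ∑ v ∈ L, ((nb G L v).card : ℝ) + L.card * ∑ w ∈ R, ((nb G R w).card : ℝ) := by
  have h1 := h.half_AV
  have h2 := h.swap.half_AV
  have hl := h.lampos
  have hlp := h.lpos
  set XL := ∑ v ∈ L, x v
  set XR := ∑ v ∈ R, x v
  set EL := ∑ v ∈ L, ((nb G L v).card : ℝ)
  set ER := ∑ w ∈ R, ((nb G R w).card : ℝ)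
  have h3 : (1 - ε) * L.card ≤ XL := by
    have := Finset.card_nsmul_le_sum L x (1 - ε) (fun u _ => h.xlo u)
    rw [nsmul_eq_mul] at this
    linarith
  have h4 := h.low
  have h5 : lam * (lam * XL) ≤ lam * (EL + L.card * XR) := by gcongr
  have h6 : (L.card : ℝ) * (lam * XR) ≤ L.card * (ER + R.card * XL) := by gcongr
  have hk := h.k3
  have he := h.eps_k0
  have h7 : (k - 1) * lam * XL ≤ (lam ^ 2 - L.card * R.card) * XL := by
    apply mul_le_mul_of_nonneg_right
    · linarith
    · refine le_trans ?_ h3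
      apply mul_nonneg _ hlp.le
      linarith
  have h8 : (k - 1) * lam * ((1 - ε) * L.card) ≤ (k - 1) * lam * XL := by
    apply mul_le_mul_of_nonneg_left h3
    apply mul_nonneg _ hl.le
    linarith
  nlinarith

lemma exists_max (h : SD k G L R lam ε x) : ∃ v ∈ L, ∀ u ∈ L, x u ≤ x v := by
  have : L.Nonempty := by
    rw [← Finset.card_pos]
    exact_mod_cast h.lpos
  exact Finset.exists_max_image L x this

lemma deg_bound (h : SD k G L R lam ε x) (a b : ℕ) (ha : ∀ v ∈ L, (nb G L v).card ≤ a)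
    (hb : ∀ w ∈ R, (nb G R w).card ≤ b) (hab : a + b ≤ k - 1) :
    lam * (lam - (k - 1)) ≤ L.card * R.card := by
  obtain ⟨v, hv, hvm⟩ := h.exists_max
  obtain ⟨w, hw, hwm⟩ := h.swap.exists_max
  have h1 : lam * x v ≤ a * x v + R.card * x w := by
    rw [h.eig' v]
    have e1 := h.sum_le_max (nb G L v) (x v) (fun u hu => hvm u (mem_nb.1 hu).1)
    have e2 := h.sum_nb_le R v
    have e3 := h.sum_le_max R (x w) hwm
    have e4 : ((nb G L v).card : ℝ) * x v ≤ a * x v := by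
      have := h.xpos v
      have := ha v hv
      gcongr
    linarith
  have h2 : lam * x w ≤ b * x w + L.card * x v := by
    rw [h.eig' w]
    have e1 := h.sum_le_max (nb G R w) (x w) (fun u hu => hwm u (mem_nb.1 hu).1)
    have e2 := h.sum_nb_le L w
    have e3 := h.sum_le_max L (x v) hvm
    have e4 : ((nb G R w).card : ℝ) * x w ≤ b * x w := by
      have := h.xpos w
      have := hb w hw
      gcongr
    linarith
  have hxv := h.xpos v
  have hxw := h.xpos w
  have hkk := h.kk
  have hab' : (a : ℝ) + b ≤ k - 1 := by
    have : a + b + 1 ≤ k := by omega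
    have : (a : ℝ) + b + 1 ≤ k := by exact_mod_cast this
    linarith
  have ha0 : (0 : ℝ) ≤ a := Nat.cast_nonneg _
  have hb0 : (0 : ℝ) ≤ b := Nat.cast_nonneg _
  have hl := h.lampos
  have hlb : (b : ℝ) ≤ lam := by
    have e1 := h.lamlo
    have e2 := h.big
    have e3 := h.eps_k0
    have e4 := h.npos
    have e5 := h.k3
    have e6 : ε * n ≤ 1 / 27000 * n := by gcongr
    nlinarith
  have h3 : (lam - b) * ((lam - a) * x v) ≤ (lam - b) * (R.card * x w) :=
    mul_le_mul_of_nonneg_left (by linarith) (by linarith)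
  have h4 : (R.card : ℝ) * ((lam - b) * x w) ≤ R.card * (L.card * x v) :=
    mul_le_mul_of_nonneg_left (by linarith) (Nat.cast_nonneg _)
  have h5 : ((lam - b) * (lam - a)) * x v ≤ (L.card * R.card) * x v := by nlinarith
  have h6 := le_of_mul_le_mul_right h5 hxv
  nlinarith [mul_nonneg ha0 hb0, mul_le_mul_of_nonneg_left hab' hl.le]

end SD
end ABFinal


section ABFinal2
open scoped Classical
open Finset

namespace SD

variable {n k : ℕ} {G : SimpleGraph (Fin n)} {L R : Finset (Fin n)} {lam ε : ℝ} {x : Fin n → ℝ}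

lemma kthr (h : SD k G L R lam ε x) : ((k : ℝ) - 1) * thr n k ε ≤ n / 500 := by
  have h1 := h.thr_le
  have h2 := h.k3
  have h3 := h.eps_k3
  have h4 : (0 : ℝ) ≤ thr n k ε := Nat.cast_nonneg _
  calc ((k : ℝ) - 1) * thr n k ε ≤ k * thr n k ε := by nlinarith
    _ ≤ k * (2 * k ^ 2 * (ε * n)) := by gcongr
    _ = 2 * (ε * k ^ 3) * n := by ring
    _ = n / 500 := by rw [h3]; ring

lemma km1 (h : SD k G L R lam ε x) : ((k - 1 : ℕ) : ℝ) = (k : ℝ) - 1 := by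
  have := h.kk
  rw [Nat.cast_sub (by omega)]; simp

lemma ER_one (h : SD k G L R lam ε x) (hD : (Dj G R 1).card ≤ thr n k ε) :
    ∑ w ∈ R, ((nb G R w).card : ℝ) ≤ n / 500 := by
  have h1 : ∑ w ∈ R, (nb G R w).card ≤ (Dj G R 1).card * (k - 1) := by
    unfold Dj
    rw [Finset.card_filter, Finset.sum_mul]
    apply Finset.sum_le_sum
    intro w hw
    have := h.swap.degL w hw
    split_ifs <;> omega
  have h2 : ∑ w ∈ R, (nb G R w).card ≤ (k - 1) * thr n k ε := by
    rw [mul_comm]; exact h1.trans (Nat.mul_le_mul_right _ hD)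
  have h3 := (Nat.cast_le (α := ℝ)).2 h2
  push_cast at h3
  rw [h.km1] at h3
  exact h3.trans h.kthr

lemma ER_two (h : SD k G L R lam ε x) (hD : (Dj G R 2).card ≤ thr n k ε) :
    ∑ w ∈ R, ((nb G R w).card : ℝ) ≤ R.card + n / 500 := by
  have h1 : ∑ w ∈ R, (nb G R w).card ≤ R.card + (Dj G R 2).card * (k - 1) := by
    unfold Dj
    rw [Finset.card_filter, Finset.sum_mul, Finset.card_eq_sum_ones R, ← Finset.sum_add_distrib]
    apply Finset.sum_le_sum
    intro w hw
    have := h.swap.degL w hw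
    split_ifs <;> omega
  have h2 : ∑ w ∈ R, (nb G R w).card ≤ R.card + (k - 1) * thr n k ε := by
    rw [mul_comm (k - 1)]; exact h1.trans (Nat.add_le_add_left (Nat.mul_le_mul_right _ hD) _)
  have h3 := (Nat.cast_le (α := ℝ)).2 h2
  push_cast at h3
  rw [h.km1] at h3
  linarith [h.kthr]

lemma many_good (h : SD k G L R lam ε x) (hD : (Dj G R 1).card ≤ thr n k ε) :
    (n : ℝ) / 4 ≤ (Dj G L (k - 1)).card := by
  have hER := h.ER_one hD
  have hAV := h.AV
  have hkk := h.kk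
  have hEL : ∑ v ∈ L, ((nb G L v).card : ℝ) ≤ ((k : ℝ) - 2) * L.card + (Dj G L (k - 1)).card := by
    have h1 : ∑ v ∈ L, (nb G L v).card ≤ L.card * (k - 2) + (Dj G L (k - 1)).card := by
      unfold Dj
      rw [Finset.card_filter, Finset.card_eq_sum_ones L, Finset.sum_mul, ← Finset.sum_add_distrib]
      apply Finset.sum_le_sum
      intro w hw
      have := h.degL w hw
      split_ifs <;> omega
    have h3 := (Nat.cast_le (α := ℝ)).2 h1
    push_cast at h3
    rw [Nat.cast_sub (by omega)] at h3
    push_cast at h3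
    linarith
  set g := ((Dj G L (k - 1)).card : ℝ)
  set EL := ∑ v ∈ L, ((nb G L v).card : ℝ)
  set ER := ∑ v ∈ R, ((nb G R v).card : ℝ)
  have hl := h.lampos
  have hlp := h.lpos
  have hn := h.npos
  have hlo := h.lamlo
  have e1 : lam * EL ≤ lam * (((k : ℝ) - 2) * L.card + g) := by gcongr
  have e2 : (L.card : ℝ) * ER ≤ L.card * (n / 500) := by gcongr
  have e3 : (L.card : ℝ) * (n / 500) ≤ L.card * (lam / 250) :=
    mul_le_mul_of_nonneg_left (by linarith) hlp.le
  have e4 := h.eps_k1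
  have e5 := h.eps_pos
  have e6 : lam * (9 / 10 * L.card) ≤ lam * g := by
    have e7 : ((k : ℝ) - 1) * ε * (L.card * lam) ≤ 1 / 9000 * (L.card * lam) := by
      gcongr; linarith
    have e8 : 0 < L.card * lam := by positivity
    nlinarith
  have e7 := le_of_mul_le_mul_left e6 hl
  have e8 := h.llo
  have e9 := h.eps_k0
  have e10 : ε * n ≤ 1 / 27000 * n := by gcongr
  linarith

lemma ER_le_two (h : SD k G L R lam ε x) (hD : (Dj G R 1).card ≤ thr n k ε) :
    ∑ w ∈ R, (nb G R w).card ≤ 2 := by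
  by_contra hc
  push Not at hc
  have hkk := h.kk
  obtain ⟨Q0, q1, q2, q3, q4, q5, q6⟩ := two_edges G R hc
  have hg := h.many_good hD
  set F := Q0.flatten.toFinset with hF
  have hFc : F.card ≤ 4 := by
    rw [hF]
    have := Q0.flatten.toFinset_card_le
    omega
  set B := F.biUnion (fun f => L \ nb G L f) with hB
  have hBc : B.card ≤ 4 * mm n ε := by
    refine (Finset.card_biUnion_le_card_mul _ _ (mm n ε) ?_).trans (Nat.mul_le_mul_right _ hFc)
    intro f hf
    exact h.swap.ml' f (q4 f (List.mem_toFinset.1 hf))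
  have hBL : ∀ b ∈ B, b ∈ L := by
    intro b hb
    obtain ⟨f, _, hf⟩ := mem_biUnion.1 hb
    exact (mem_sdiff.1 hf).1
  have hsub : Dj G L (k - 1) ⊆ B ∪ B.biUnion (fun b => nb G L b) := by
    intro v hv
    obtain ⟨hvL, hvd⟩ := mem_filter.1 hv
    by_contra hvn
    rw [mem_union, not_or] at hvn
    obtain ⟨us, hus, husc⟩ := Finset.exists_subset_card_eq hvd
    have hadj : ∀ u ∈ L, u ∉ B → ∀ q ∈ Q0.flatten, G.Adj u q := by
      intro u hu huB q hq
      by_contra hcc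
      apply huB
      rw [hB, mem_biUnion]
      exact ⟨q, List.mem_toFinset.2 hq, mem_sdiff.2 ⟨hu, fun h' => hcc (mem_nb.1 h').2.symm⟩⟩
    have husB : ∀ u ∈ us, u ∈ L ∧ u ∉ B := by
      intro u hu
      obtain ⟨h1, h2⟩ := mem_nb.1 (hus hu)
      refine ⟨h1, fun hb => hvn.2 ?_⟩
      exact mem_biUnion.2 ⟨u, hb, mem_nb.2 ⟨hvL, h2.symm⟩⟩
    apply h.free
    refine shape_wheel G L R h.disj k (by omega) (mm n ε) (k - 1) (h.ml') (h.swap.degL) v hvL us hus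
      (by omega) Q0 q1 q2 q3 ?_ (List.replicate (k - 1 - Q0.length) 0) ?_ ?_ ?_
    · intro q hq
      exact ⟨q4 q hq, hadj v hvL hvn.1 q hq, fun u hu => hadj u (husB u hu).1 (husB u hu).2 q hq⟩
    · simp; omega
    · simp only [List.map_replicate, List.sum_replicate, smul_eq_mul]; omega
    · intro j hj
      obtain ⟨-, rfl⟩ := List.mem_replicate.1 hj
      refine ⟨by omega, ?_⟩
      rw [show k - 1 + 1 = k by omega]
      change thr n k ε < _
      have hR0 : Dj G R 0 = R := by unfold Dj; simp
      rw [hR0]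
      have e1 := h.thr_le
      have e2 := h.rlo
      have e3 := h.eps_k2
      have e4 := h.eps_k0
      have e5 := h.npos
      have e6 : ε * k ^ 2 * n ≤ 1 / 3000 * n := by gcongr
      have e7 : ε * n ≤ 1 / 27000 * n := by gcongr
      have : (thr n k ε : ℝ) < R.card := by nlinarith
      exact_mod_cast this
  have hc2 : (Dj G L (k - 1)).card ≤ k * (4 * mm n ε) := by
    have h1 := (Finset.card_le_card hsub).trans (Finset.card_union_le _ _)
    have h2 : (B.biUnion (fun b => nb G L b)).card ≤ B.card * (k - 1) :=
      Finset.card_biUnion_le_card_mul _ _ _ (fun b hb => h.degL b (hBL b hb))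
    have h3 : B.card + B.card * (k - 1) = B.card * k := by
      obtain ⟨m, rfl⟩ : ∃ m, k = m + 1 := ⟨k - 1, by omega⟩
      simp; ring
    have h4 : B.card * k ≤ 4 * mm n ε * k := Nat.mul_le_mul_right _ hBc
    calc _ ≤ B.card + B.card * (k - 1) := by omega
      _ ≤ 4 * mm n ε * k := by omega
      _ = _ := by ring
  have h5 : ((Dj G L (k - 1)).card : ℝ) ≤ k * (4 * mm n ε) := by exact_mod_cast hc2
  have h6 := h.mm_le
  have h7 := h.eps_k1
  have h8 := h.npos
  have h9 : (k : ℝ) * (4 * mm n ε) ≤ k * (4 * (ε * n)) := by gcongr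
  have h10 : ε * k * n ≤ 1 / 9000 * n := by gcongr
  nlinarith

lemma caseA (h : SD k G L R lam ε x) (hD : (Dj G R 1).card ≤ thr n k ε) :
    lam * (lam - (k - 1)) ≤ L.card * R.card + 5 / 2 := by
  have hER : ∑ w ∈ R, ((nb G R w).card : ℝ) ≤ 2 := by exact_mod_cast h.ER_le_two hD
  obtain ⟨v, hv, hvm⟩ := h.exists_max
  have hxv := h.xpos v
  have hl := h.lampos
  have h1 : lam * x v ≤ (k - 1) * x v + ∑ u ∈ R, x u := by
    rw [h.eig' v]
    have e1 := h.sum_le_max (nb G L v) (x v) (fun u hu => hvm u (mem_nb.1 hu).1)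
    have e2 := h.sum_nb_le R v
    have e4 : ((nb G L v).card : ℝ) * x v ≤ (k - 1) * x v := by
      rw [← h.km1]
      have := h.degL v hv
      gcongr
    linarith
  have h2 : lam * ∑ u ∈ R, x u ≤ 2 + R.card * (L.card * x v) := by
    have e1 := h.swap.half_AV
    have e2 := h.sum_le_max L (x v) hvm
    have e3 : (R.card : ℝ) * ∑ u ∈ L, x u ≤ R.card * (L.card * x v) := by gcongr
    linarith
  have h3 : lam * (lam * x v) ≤ lam * ((k - 1) * x v + ∑ u ∈ R, x u) := by gcongr
  have h4 := h.xlo v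
  have h5 := h.eps_k0
  have h6 : (lam * (lam - (k - 1))) * x v ≤ (L.card * R.card + 5 / 2) * x v := by nlinarith
  exact le_of_mul_le_mul_right h6 hxv

lemma caseB2 (h : SD k G L R lam ε x) (hk6 : 6 ≤ k) (hD1 : thr n k ε < (Dj G R 1).card)
    (hD : (Dj G R 2).card ≤ thr n k ε) : False := by
  have hER := h.ER_two hD
  have hAV := h.AV
  have hEL : ∑ v ∈ L, ((nb G L v).card : ℝ) ≤ L.card * ((2 * k - 1) / 3) := by
    have := Finset.sum_le_card_nsmul L (fun v => ((nb G L v).card : ℝ)) ((2 * k - 1) / 3) (by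
      intro v hv
      have h1 := h.deg_third hD1 v hv
      have h2 : 3 * (nb G L v).card + 1 ≤ 2 * k := by omega
      have h3 : (3 : ℝ) * (nb G L v).card + 1 ≤ 2 * k := by exact_mod_cast h2
      linarith)
    simpa using this
  have hl := h.lampos
  have hlp := h.lpos
  have hn := h.npos
  have hlo := h.lamlo
  have hr := h.rhi
  have e4 := h.eps_k1
  have e5 := h.eps_k0
  have e6 := h.eps_pos
  set EL := ∑ v ∈ L, ((nb G L v).card : ℝ)
  set ER := ∑ v ∈ R, ((nb G R v).card : ℝ)
  have hk6' : (6 : ℝ) ≤ k := by exact_mod_cast hk6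
  have e7 : ε * n ≤ 1 / 27000 * n := by gcongr
  have e8 : ER ≤ lam * (101 / 100) := by linarith
  have e9 : lam * EL ≤ lam * (L.card * ((2 * k - 1) / 3)) := by gcongr
  have e10 : (L.card : ℝ) * ER ≤ L.card * (lam * (101 / 100)) := by gcongr
  have e11 : (k - 1) * (1 - ε) * (L.card * lam) ≤ ((2 * k - 1) / 3 + 101 / 100) * (L.card * lam) := by
    linarith
  have e12 := le_of_mul_le_mul_right e11 (by positivity)
  nlinarith

lemma main (h : SD k G L R lam ε x) (hk4 : k ≠ 4) (hk5 : k ≠ 5) :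
    lam * (lam - (k - 1)) ≤ L.card * R.card + 5 / 2 := by
  have hkk := h.kk
  by_cases hR1 : (Dj G R 1).card ≤ thr n k ε
  · exact h.caseA hR1
  by_cases hL1 : (Dj G L 1).card ≤ thr n k ε
  · have := h.swap.caseA hL1
    linarith
  push Not at hR1 hL1
  have hdL := h.deg_third hR1
  have hdR := h.swap.deg_third hL1
  suffices hs : ∃ a b : ℕ, (∀ v ∈ L, (nb G L v).card ≤ a) ∧ (∀ w ∈ R, (nb G R w).card ≤ b) ∧ a + b ≤ k - 1 by
    obtain ⟨a, b, ha, hb, hab⟩ := hs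
    linarith [h.deg_bound a b ha hb hab]
  by_cases hk3 : k = 3
  · refine ⟨1, 1, fun v hv => ?_, fun v hv => ?_, by omega⟩
    · have := hdL v hv; omega
    · have := hdR v hv; omega
  by_cases hR2 : (Dj G R 2).card ≤ thr n k ε
  · exact (h.caseB2 (by omega) hR1 hR2).elim
  by_cases hL2 : (Dj G L 2).card ≤ thr n k ε
  · exact (h.swap.caseB2 (by omega) hL1 hL2).elim
  push Not at hR2 hL2
  have hdL2 := h.deg_half hR2
  have hdR2 := h.swap.deg_half hL2
  refine ⟨(k - 1) / 2, (k - 1) / 2, fun v hv => ?_, fun v hv => ?_, by omega⟩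
  · have := hdL2 v hv; omega
  · have := hdR2 v hv; omega

end SD

lemma arith_final (l r l0 r0 n : ℕ) (h1 : l + r = n) (h2 : l0 + r0 = n) (h3 : l0 ≤ r0 + 2) (h4 : r0 ≤ l0 + 2)
    (h : (l0 : ℝ) * r0 + 1 ≤ (l : ℝ) * r + 5 / 2) : l ≤ r + 2 ∧ r ≤ l + 2 := by
  have h5 : 2 * (l0 * r0) + 2 ≤ 2 * (l * r) + 5 := by
    have : (2 : ℝ) * (l0 * r0) + 2 ≤ 2 * (l * r) + 5 := by linarith
    exact_mod_cast this
  have h6 : l0 * r0 ≤ l * r + 1 := by omega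
  zify at *
  set d : ℤ := (l : ℤ) - r with hd
  set e : ℤ := (l0 : ℤ) - r0 with he
  have hpar : ∃ c : ℤ, d = e + 2 * c := ⟨(l : ℤ) - l0, by omega⟩
  obtain ⟨c, hc⟩ := hpar
  have h7 : d ^ 2 ≤ e ^ 2 + 4 := by
    have a1 : 4 * ((l : ℤ) * r) = n ^ 2 - d ^ 2 := by rw [← h1, hd]; ring
    have a2 : 4 * ((l0 : ℤ) * r0) = n ^ 2 - e ^ 2 := by rw [← h2, he]; ring
    linarith
  have he1 : e ≤ 2 := by omega
  have he2 : -2 ≤ e := by omega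
  have hd1 : d ≤ 2 := by
    by_contra hcon
    have : 3 ≤ d := by omega
    have h8 : e = -2 ∨ e = -1 ∨ e = 0 ∨ e = 1 ∨ e = 2 := by omega
    rcases h8 with h8 | h8 | h8 | h8 | h8 <;> rw [h8] at h7 hc
    · have : 4 ≤ d := by omega
      nlinarith
    · nlinarith
    · nlinarith
    · nlinarith
    · have : 4 ≤ d := by omega
      nlinarith
  have hd2 : -2 ≤ d := by
    by_contra hcon
    have : d ≤ -3 := by omega
    have h8 : e = -2 ∨ e = -1 ∨ e = 0 ∨ e = 1 ∨ e = 2 := by omega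
    rcases h8 with h8 | h8 | h8 | h8 | h8 <;> rw [h8] at h7 hc
    · have : d ≤ -4 := by omega
      nlinarith
    · nlinarith
    · nlinarith
    · nlinarith
    · have : d ≤ -4 := by omega
      nlinarith
  constructor <;> omega

end ABFinal2

/-- The two sides of a maximum cut have size between `n/2 - 1` and
`n/2 + 1`. -/
theorem almost_balanced (k : ℕ) (hk : 3 ≤ k) (hk4 : k ≠ 4) (hk5 : k ≠ 5) :
    ∃ N : ℕ, ∀ n : ℕ, N ≤ n → ∀ G : SimpleGraph (Fin n), IsSpexWheel (2 * k + 1) G →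
      ∀ L R : Finset (Fin n), IsMaxCut G L R →
        (n : ℝ) / 2 - 1 ≤ (L.card : ℝ) ∧ (L.card : ℝ) ≤ (n : ℝ) / 2 + 1 ∧
        (n : ℝ) / 2 - 1 ≤ (R.card : ℝ) ∧ (R.card : ℝ) ≤ (n : ℝ) / 2 + 1 := by
  have hk0 : (0 : ℝ) < k := by
    have : 0 < k := by omega
    exact_mod_cast this
  obtain ⟨ε, hε⟩ : ∃ ε : ℝ, ε = 1 / (1000 * (k : ℝ) ^ 3) := ⟨_, rfl⟩
  have hε0 : 0 < ε := by rw [hε]; positivity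
  obtain ⟨N1, hN1⟩ := structure_thm k hk ε hε0
  obtain ⟨N2, hN2⟩ := exists_nat_gt (100 * (k : ℝ) ^ 2 / ε)
  refine ⟨N1 + N2, fun n hn G hG L R hLR => ?_⟩
  obtain ⟨hR, hmc⟩ := hLR
  obtain ⟨⟨l0, r0, hs, h1, h2, h3⟩, hlam, x, b1, b2, b3, b4, b5, b6, b7⟩ := hN1 n (by omega) G hG L hmc
  subst hR
  have hcard : L.card + Lᶜ.card = n := by rw [Finset.card_add_card_compl]; simp
  have hcardR : (L.card : ℝ) + Lᶜ.card = n := by exact_mod_cast hcard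
  have hs' : (l0 : ℝ) + r0 = n := by exact_mod_cast hs
  have a1 : (l0 : ℝ) ≤ r0 + 2 := by exact_mod_cast h1
  have a2 : (r0 : ℝ) ≤ l0 + 2 := by exact_mod_cast h2
  have hsd : SD k G L Lᶜ (lam1 G) ε x :=
    { disj := disjoint_compl_right
      cov := by simp
      free := hG.1
      xlo := b1
      xhi := b2
      eig := b3
      lamlo := hlam
      lamhi := b4
      llo := b5.1
      lhi := b5.2
      rlo := by linarith [b5.2]
      rhi := by linarith [b5.1]
      ml := b6
      mr := b7
      low := by
        have c1 : (L.card : ℝ) * Lᶜ.card ≤ (n : ℝ) ^ 2 / 4 := by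
          rw [← hcardR]; nlinarith [sq_nonneg ((L.card : ℝ) - Lᶜ.card)]
        have c2 : (n : ℝ) ^ 2 / 4 ≤ (l0 : ℝ) * r0 + 1 := by
          rw [← hs']; nlinarith
        nlinarith
      kk := hk
      eps := hε
      big := by
        rw [div_lt_iff₀ hε0] at hN2
        have : (N2 : ℝ) ≤ n := by exact_mod_cast (by omega : N2 ≤ n)
        nlinarith }
  have hmain := hsd.main hk4 hk5
  obtain ⟨f1, f2⟩ := arith_final L.card Lᶜ.card l0 r0 n hcard hs h1 h2 (by linarith)
  have g1 : (L.card : ℝ) ≤ Lᶜ.card + 2 := by exact_mod_cast f1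
  have g2 : (Lᶜ.card : ℝ) ≤ L.card + 2 := by exact_mod_cast f2
  refine ⟨?_, ?_, ?_, ?_⟩ <;> linarith
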